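/- Let k ≥ 6 be an even integer, and for each n let spex(n, W_{2k+1}) denote the maximum of λ₁(G) over all n-vertex W_{2k+1}-free simple graphs G. Then, as n → ∞ along integers with n ≡ 2 (mod 4), the quantity n · ( spex(n, W_{2k+1}) − (k − 1 + √((k−1)² + n²))/2 ) tends to 1; equivalently, for n ≡ 2 (mod 4), spex(n, W_{2k+1}) = (k − 1 + √((k−1)² + n²))/2 + (1 + o(1))/n. -/

import Mathlib

/-- The wheel graph on `t` vertices: vertex `0` joined to every vertex of the
cycle `1, 2, …, t-1` (with `t-1` adjacent to `1`). -/
def wheelGraph (t : ℕ) : SimpleGraph (Fin t) where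
  Adj a b := a ≠ b ∧ (a.val = 0 ∨ b.val = 0 ∨ a.val + 1 = b.val ∨ b.val + 1 = a.val ∨
      (a.val = 1 ∧ b.val = t - 1) ∨ (b.val = 1 ∧ a.val = t - 1))
  symm := by
    constructor
    intro a b h
    exact ⟨h.1.symm, by tauto⟩
  loopless := by
    constructor
    intro a h
    exact h.1 rfl

/-- `G` contains a copy of `F`, i.e. a subgraph isomorphic to `F`. -/
def ContainsCopy {α β : Type*} (F : SimpleGraph α) (G : SimpleGraph β) : Prop :=
  ∃ f : α ↪ β, ∀ a b, F.Adj a b → G.Adj (f a) (f b)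

/-- `G` is `W_t`-free: it contains no subgraph isomorphic to the wheel on `t` vertices. -/
def WheelFree (t : ℕ) {n : ℕ} (G : SimpleGraph (Fin n)) : Prop :=
  ¬ ContainsCopy (wheelGraph t) G

/-- The spectral radius of `G`: the largest eigenvalue of its adjacency matrix. -/
noncomputable def lam1 {n : ℕ} (G : SimpleGraph (Fin n)) : ℝ := by
  classical
  exact sSup {μ : ℝ | Module.End.HasEigenvalue (Matrix.toLin' (G.adjMatrix ℝ)) μ}

/-- The number of edges of a graph on a finite vertex type. -/
noncomputable def edgeCount {V : Type*} [Fintype V] (G : SimpleGraph V) : ℕ := by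
  classical
  exact G.edgeFinset.card

/-- The degree of a vertex. -/
noncomputable def deg {n : ℕ} (G : SimpleGraph (Fin n)) (v : Fin n) : ℕ := by
  classical
  exact G.degree v

/-- The number of neighbours of `v` inside the set `A`. -/
noncomputable def degIn {n : ℕ} (G : SimpleGraph (Fin n)) (A : Finset (Fin n)) (v : Fin n) : ℕ := by
  classical
  exact (A.filter fun u => G.Adj v u).card

/-- The number of edges of `G` with one endpoint in `S` and the other outside `S`. -/
noncomputable def cutCount {n : ℕ} (G : SimpleGraph (Fin n)) (S : Finset (Fin n)) : ℕ := by
  classical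
  exact ((Finset.univ : Finset (Fin n × Fin n)).filter
    fun p => G.Adj p.1 p.2 ∧ p.1 ∈ S ∧ p.2 ∉ S).card

/-- `(S, T)` is a maximum cut of `G`. -/
def IsMaxCut {n : ℕ} (G : SimpleGraph (Fin n)) (S T : Finset (Fin n)) : Prop :=
  T = Sᶜ ∧ ∀ S' : Finset (Fin n), cutCount G S' ≤ cutCount G S

/-- `G` attains the maximum spectral radius among all `n`-vertex `W_t`-free graphs. -/
def IsSpexWheel (t : ℕ) {n : ℕ} (G : SimpleGraph (Fin n)) : Prop :=
  WheelFree t G ∧ ∀ H : SimpleGraph (Fin n), WheelFree t H → lam1 H ≤ lam1 G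

/-- `G` attains the maximum number of edges among all `n`-vertex `W_t`-free graphs. -/
def IsExWheel (t : ℕ) {n : ℕ} (G : SimpleGraph (Fin n)) : Prop :=
  WheelFree t G ∧ ∀ H : SimpleGraph (Fin n), WheelFree t H → edgeCount H ≤ edgeCount G

/-- The maximum spectral radius among all `n`-vertex `W_{2k+1}`-free graphs. -/
noncomputable def spexWheel (k n : ℕ) : ℝ :=
  sSup {x : ℝ | ∃ G : SimpleGraph (Fin n), WheelFree (2 * k + 1) G ∧ lam1 G = x}

/-!
Write `K = k - 1`. Let `G` be an extremal graph with Perron vector `x`, scaled to maximum `1`.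
Expanding `λ₁² x` at a vertex `u` with `x u = 1` shows that the neighbourhood of `u`, which has few
edges inside, and its complement form an almost complete balanced bipartition. Replacing the
neighbourhood of a vertex by one side of it would increase `λ₁` unless all entries of `x` are close
to `1`, and then every vertex misses only a few vertices of the other side.

In such a graph a wheel is found as soon as a hub and its neighbours on its own side meet a suitable
family of disjoint paths on the other side. Hence all inner degrees are at most `K`, some vertex of
one side, `A`, attains `K` (otherwise the total number of inner edges would be too small), then
almost all of `A` does, and the other side has at most one edge.

Compare with the join of a `K`-regular graph on `A` and an edgeless graph, whose spectral radius
depends only on `K` and `|A| |Aᶜ|` and equals `(K + √(K² + n²)) / 2` at `|A| = |Aᶜ| = n / 2`. The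
single edge contributes `2 / n` up to lower order. As `n ≡ 2 (mod 4)`, one loses `1 / n` again:
either the sides differ in size, so that `|A| |Aᶜ| ≤ n² / 4 - 1`, or both are odd and, `K` being
odd, some vertex of `A` has inner degree less than `K`.

Conversely, taking for `A` a disjoint union of `K`-regular graphs on fewer than `2k` vertices with
`|A| = n / 2 + 1` and putting one edge into the other side gives a wheel-free graph with the same
asymptotics.
-/

section

open Finset Matrix Filter Topology

section Spectral

/-- A nonnegative eigenvector of the adjacency matrix of `G` for the eigenvalue `μ`, scaled so
that its largest entry is `1`. -/
structure IsPerronVector {V : Type*} [Fintype V] (G : SimpleGraph V) [DecidableRel G.Adj]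
    (μ : ℝ) (x : V → ℝ) : Prop where
  nonneg (v : V) : 0 ≤ x v
  le_one (v : V) : x v ≤ 1
  exists_eq_one : ∃ v, x v = 1
  sum_neighborFinset (v : V) : ∑ u ∈ G.neighborFinset v, x u = μ * x v

lemma IsPerronVector.sum_le_card {V : Type*} [Fintype V] {G : SimpleGraph V} [DecidableRel G.Adj]
    {μ : ℝ} {x : V → ℝ} (hx : IsPerronVector G μ x) (s : Finset V) : ∑ v ∈ s, x v ≤ #s := by
  simpa using sum_le_card_nsmul s x 1 fun v _ ↦ hx.le_one v

lemma IsPerronVector.mulVec_eq {V : Type*} [Fintype V] {G : SimpleGraph V} [DecidableRel G.Adj]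
    {μ : ℝ} {x : V → ℝ} (hx : IsPerronVector G μ x) : G.adjMatrix ℝ *ᵥ x = μ • x := by
  ext v
  rw [SimpleGraph.adjMatrix_mulVec_apply, hx.sum_neighborFinset, Pi.smul_apply, smul_eq_mul]

lemma IsPerronVector.form_eq {V : Type*} [Fintype V] {G : SimpleGraph V} [DecidableRel G.Adj]
    {μ : ℝ} {x : V → ℝ} (hx : IsPerronVector G μ x) :
    x ⬝ᵥ G.adjMatrix ℝ *ᵥ x = μ * (x ⬝ᵥ x) := by
  rw [hx.mulVec_eq, dotProduct_smul, smul_eq_mul]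

section Form

variable {V : Type*} [Fintype V] (G : SimpleGraph V) [DecidableRel G.Adj] (x : V → ℝ)

lemma adjMatrix_form_eq_sum :
    x ⬝ᵥ G.adjMatrix ℝ *ᵥ x = ∑ v, x v * ∑ u ∈ G.neighborFinset v, x u := by
  simp only [dotProduct, SimpleGraph.adjMatrix_mulVec_apply]

lemma adjMatrix_form_le_abs :
    x ⬝ᵥ G.adjMatrix ℝ *ᵥ x ≤ |x| ⬝ᵥ G.adjMatrix ℝ *ᵥ |x| := by
  simp only [adjMatrix_form_eq_sum, mul_sum, Pi.abs_apply, ← abs_mul]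
  gcongr
  exact le_abs_self _

lemma abs_dotProduct_abs : |x| ⬝ᵥ |x| = x ⬝ᵥ x := by
  simp [dotProduct]

end Form

variable {n : ℕ} (G : SimpleGraph (Fin n)) [DecidableRel G.Adj]

lemma lam1_eq_sSup_spectrum : lam1 G = sSup (spectrum ℝ (G.adjMatrix ℝ)) := by
  simp only [lam1, Module.End.hasEigenvalue_iff_mem_spectrum, spectrum_toLin', Set.ofPred_mem_eq]
  congr!

lemma le_lam1_of_mem_spectrum {μ : ℝ} (hμ : μ ∈ spectrum ℝ (G.adjMatrix ℝ)) : μ ≤ lam1 G := by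
  rw [lam1_eq_sSup_spectrum]
  exact le_csSup (Matrix.finite_spectrum _).bddAbove hμ

lemma lam1_mem_spectrum (hn : 0 < n) : lam1 G ∈ spectrum ℝ (G.adjMatrix ℝ) := by
  rw [lam1_eq_sSup_spectrum]
  exact Set.Nonempty.csSup_mem
    ⟨_, (G.isHermitian_adjMatrix ℝ).eigenvalues_mem_spectrum_real ⟨0, hn⟩⟩
    (Matrix.finite_spectrum _)

lemma posSemidef_lam1_sub_adjMatrix :
    (algebraMap ℝ (Matrix (Fin n) (Fin n) ℝ) (lam1 G) - G.adjMatrix ℝ).PosSemidef := by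
  refine posSemidef_iff_isHermitian_and_spectrum_nonneg.2
    ⟨(isHermitian_diagonal _).sub (G.isHermitian_adjMatrix ℝ), fun ν hν ↦ ?_⟩
  rw [← spectrum.singleton_sub_eq, Set.singleton_sub] at hν
  obtain ⟨μ, hμ, rfl⟩ := hν
  exact sub_nonneg.2 (le_lam1_of_mem_spectrum G hμ)

lemma lam1_sub_adjMatrix_mulVec (x : Fin n → ℝ) :
    (algebraMap ℝ (Matrix (Fin n) (Fin n) ℝ) (lam1 G) - G.adjMatrix ℝ) *ᵥ x =
      lam1 G • x - G.adjMatrix ℝ *ᵥ x := by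
  rw [sub_mulVec, Algebra.algebraMap_eq_smul_one, smul_mulVec, one_mulVec]

lemma adjMatrix_form_le_lam1_mul (x : Fin n → ℝ) :
    x ⬝ᵥ G.adjMatrix ℝ *ᵥ x ≤ lam1 G * (x ⬝ᵥ x) := by
  have h := (posSemidef_lam1_sub_adjMatrix G).dotProduct_mulVec_nonneg x
  rw [lam1_sub_adjMatrix_mulVec, star_trivial, dotProduct_sub, dotProduct_smul] at h
  exact sub_nonneg.1 h

lemma mulVec_eq_lam1_smul_of_form_eq {x : Fin n → ℝ}
    (h : x ⬝ᵥ G.adjMatrix ℝ *ᵥ x = lam1 G * (x ⬝ᵥ x)) : G.adjMatrix ℝ *ᵥ x = lam1 G • x := by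
  have := ((posSemidef_lam1_sub_adjMatrix G).dotProduct_mulVec_zero_iff x).1 <| by
    rw [lam1_sub_adjMatrix_mulVec, star_trivial, dotProduct_sub, dotProduct_smul, h, smul_eq_mul,
      sub_self]
  rw [lam1_sub_adjMatrix_mulVec] at this
  exact (sub_eq_zero.1 this).symm

lemma exists_nonneg_eigenvector (hn : 0 < n) :
    ∃ x : Fin n → ℝ, 0 ≤ x ∧ x ≠ 0 ∧ G.adjMatrix ℝ *ᵥ x = lam1 G • x := by
  have hmem := lam1_mem_spectrum G hn
  rw [← spectrum_toLin', ← Module.End.hasEigenvalue_iff_mem_spectrum] at hmem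
  obtain ⟨y, hy⟩ := hmem.exists_hasEigenvector
  have hAy : G.adjMatrix ℝ *ᵥ y = lam1 G • y := by simpa using hy.apply_eq_smul
  refine ⟨|y|, abs_nonneg y, fun h ↦ hy.2 (funext fun v ↦ abs_eq_zero.1 (congrFun h v)),
    mulVec_eq_lam1_smul_of_form_eq G ?_⟩
  refine (adjMatrix_form_le_lam1_mul G _).antisymm ?_
  calc lam1 G * (|y| ⬝ᵥ |y|) = y ⬝ᵥ G.adjMatrix ℝ *ᵥ y := by
        rw [abs_dotProduct_abs, hAy, dotProduct_smul, smul_eq_mul]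
    _ ≤ _ := adjMatrix_form_le_abs G y

lemma exists_isPerronVector (hn : 0 < n) : ∃ x, IsPerronVector G (lam1 G) x := by
  obtain ⟨x, hx0, hx, hA⟩ := exists_nonneg_eigenvector G hn
  have : Nonempty (Fin n) := ⟨⟨0, hn⟩⟩
  obtain ⟨u, hu⟩ := Finite.exists_max x
  have hpos : 0 < x u := by
    obtain ⟨v, hv⟩ := Function.ne_iff.1 hx
    exact ((hx0 v).lt_of_ne hv.symm).trans_le (hu v)
  refine ⟨fun v ↦ x v / x u, fun v ↦ div_nonneg (hx0 v) hpos.le,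
    fun v ↦ (div_le_one hpos).2 (hu v), ⟨u, div_self hpos.ne'⟩, fun v ↦ ?_⟩
  rw [← sum_div, ← SimpleGraph.adjMatrix_mulVec_apply, hA, Pi.smul_apply, smul_eq_mul,
    mul_div_assoc]

end Spectral

section Wheels

variable {V : Type*} {G : SimpleGraph V}

lemma containsCopy_wheelGraph_of_isChain {u : V} {c : List V} (hnd : c.Nodup)
    (hu : ∀ w ∈ c, G.Adj u w) (hc : c.IsChain G.Adj)
    (hclose : ∀ a ∈ c.head?, ∀ b ∈ c.getLast?, G.Adj a b) :
    ContainsCopy (wheelGraph (c.length + 1)) G := by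
  have hstep (i j : Fin c.length) (hij : i.val + 1 = j.val) : G.Adj (c.get i) (c.get j) := by
    have := List.isChain_iff_getElem.1 hc i (by lia)
    simpa only [List.get_eq_getElem, ← hij] using this
  have hlast (i j : Fin c.length) (hi : i.val = 0) (hj : j.val + 1 = c.length) :
      G.Adj (c.get i) (c.get j) := by
    refine hclose _ ?_ _ ?_
    · rw [List.head?_eq_getElem?, List.get_eq_getElem, ← hi, List.getElem?_eq_getElem]
      rfl
    · rw [List.getLast?_eq_getElem?, List.get_eq_getElem, show c.length - 1 = j by lia,
        List.getElem?_eq_getElem]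
      rfl
  have hinj : Function.Injective (Fin.cons u c.get : Fin (c.length + 1) → V) :=
    Fin.cons_injective_iff.2 ⟨by
      rintro ⟨i, rfl⟩
      exact G.irrefl (hu _ (c.get_mem i)), List.nodup_iff_injective_get.1 hnd⟩
  refine ⟨⟨_, hinj⟩, fun a b hab ↦ ?_⟩
  cases a using Fin.cases with
  | zero =>
    cases b using Fin.cases with
    | zero => exact absurd rfl hab.1
    | succ j => exact hu _ (c.get_mem j)
  | succ i =>
    cases b using Fin.cases with
    | zero => exact (hu _ (c.get_mem i)).symm
    | succ j =>
      have h := hab.2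
      simp only [Fin.val_succ, Nat.add_sub_cancel] at h
      rcases h with h | h | h | h | h | h
      · lia
      · lia
      · exact hstep i j (by lia)
      · exact (hstep j i (by lia)).symm
      · exact hlast i j (by lia) h.2
      · exact (hlast j i (by lia) h.2).symm

/-- `IsPathFamily G C Q`: the lists in `Q` are nonempty, pairwise disjoint paths of `G` whose
vertices lie in `C`. -/
structure IsPathFamily (G : SimpleGraph V) (C : Finset V) (Q : List (List V)) : Prop where
  nodup : Q.flatten.Nodup
  ne_nil : ∀ q ∈ Q, q ≠ []
  isChain : ∀ q ∈ Q, q.IsChain G.Adj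
  mem : ∀ v ∈ Q.flatten, v ∈ C

namespace IsPathFamily

variable {C S : Finset V} {Q : List (List V)} {q : List V}

protected lemma nil : IsPathFamily G C [] := by
  constructor <;> simp

lemma cons (hQ : IsPathFamily G C Q) (hne : q ≠ []) (hnd : q.Nodup) (hch : q.IsChain G.Adj)
    (hq : ∀ v ∈ q, v ∈ C) (hdisj : q.Disjoint Q.flatten) : IsPathFamily G C (q :: Q) where
  nodup := List.Nodup.append hnd hQ.nodup hdisj
  ne_nil := List.forall_mem_cons.2 ⟨hne, hQ.ne_nil⟩
  isChain := List.forall_mem_cons.2 ⟨hch, hQ.isChain⟩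
  mem v hv := (List.mem_append.1 hv).elim (hq v) (hQ.mem v)

lemma of_cons (hQ : IsPathFamily G C (q :: Q)) : IsPathFamily G C Q where
  nodup := hQ.nodup.of_append_right
  ne_nil := (List.forall_mem_cons.1 hQ.ne_nil).2
  isChain := (List.forall_mem_cons.1 hQ.isChain).2
  mem v hv := hQ.mem v (List.mem_append_right q hv)

lemma exists_add_singletons (hQ : IsPathFamily G C Q) (r : ℕ)
    (hr : Q.flatten.length + r ≤ #C) :
    ∃ Q', IsPathFamily G C Q' ∧ Q'.length = Q.length + r ∧
      Q'.flatten.length = Q.flatten.length + r := by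
  classical
  induction r with
  | zero => exact ⟨Q, hQ, rfl, rfl⟩
  | succ r ih =>
    obtain ⟨Q', hQ', hlen, htot⟩ := ih (by lia)
    obtain ⟨v, hvC, hvQ⟩ := exists_mem_notMem_of_card_lt_card
      (s := Q'.flatten.toFinset) (t := C) ((List.toFinset_card_le _).trans_lt (by lia))
    refine ⟨[v] :: Q', hQ'.cons (List.cons_ne_nil _ _) (List.nodup_singleton v)
      (List.isChain_singleton v) (by simpa using hvC) ?_, ?_, ?_⟩
    · simpa [List.mem_toFinset] using hvQ
    · simp [hlen, add_assoc]
    · rw [List.flatten_cons, List.length_append, htot, List.length_singleton]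
      lia

lemma exists_interleaving (hQ : IsPathFamily G C Q) {a : List V} (ha : a.length = Q.length)
    (haC : ∀ s ∈ a, ∀ c ∈ C, G.Adj s c) :
    ∃ c : List V, c.Perm (a ++ Q.flatten) ∧ c.IsChain G.Adj ∧ (∀ s ∈ c.head?, s ∈ a) ∧
      ∀ t ∈ c.getLast?, t ∈ C := by
  induction Q generalizing a with
  | nil =>
    obtain rfl := List.length_eq_zero_iff.1 ha
    exact ⟨[], by simp⟩
  | cons q Q ih =>
    obtain ⟨s, a, rfl⟩ := List.exists_cons_of_length_eq_add_one ha
    obtain ⟨hs, ha'⟩ := List.forall_mem_cons.1 haC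
    obtain ⟨c, hperm, hch, hhead, hlast⟩ := ih hQ.of_cons (by simpa using ha) ha'
    have hqC : ∀ t ∈ q, t ∈ C := fun t ht ↦ hQ.mem t (List.mem_append_left _ ht)
    have hq : q ≠ [] := hQ.ne_nil q List.mem_cons_self
    refine ⟨s :: (q ++ c), ?_, ?_, by simp, fun t ht ↦ ?_⟩
    · rw [List.cons_append, List.flatten_cons]
      refine .cons s <| (hperm.append_left q).trans ?_
      simpa only [List.append_assoc] using List.perm_append_comm.append_right Q.flatten
    · rw [List.isChain_cons, List.isChain_append, List.head?_append_of_ne_nil _ hq]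
      exact ⟨fun t ht ↦ hs t (hqC t (List.mem_of_head? ht)), hQ.isChain q List.mem_cons_self, hch,
        fun t ht s' hs' ↦ (ha' s' (hhead s' hs') t (hqC t (List.mem_of_getLast? ht))).symm⟩
    · rw [← List.cons_append, List.getLast?_append, Option.mem_def,
        Option.or_eq_some_iff] at ht
      rcases ht with ht | ⟨-, ht⟩
      · exact hlast t ht
      · rw [List.getLast?_cons_of_ne_nil hq] at ht
        exact hqC t (List.mem_of_getLast? ht)

/-- The rim of the wheel alternates between the vertices of `S` and the paths of `Q`; paths that
are missing are made up for by single vertices of `C`. -/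
lemma containsCopy_wheelGraph (hQ : IsPathFamily G C Q) {u : V} {t : ℕ}
    (hS : ∀ s ∈ S, G.Adj u s) (hC : ∀ c ∈ C, G.Adj u c) (hSC : ∀ s ∈ S, ∀ c ∈ C, G.Adj s c)
    (hlen : Q.length ≤ #S) (htot : Q.flatten.length + (#S - Q.length) + #S = t) (ht : t ≤ #C) :
    ContainsCopy (wheelGraph (t + 1)) G := by
  obtain ⟨Q', hQ', hlen', htot'⟩ := hQ.exists_add_singletons (#S - Q.length) (by lia)
  obtain ⟨c, hperm, hch, hhead, hlast⟩ := hQ'.exists_interleaving (a := S.toList)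
    (by rw [length_toList]; lia) (by simpa using hSC)
  have hct : c.length = t := by
    rw [hperm.length_eq, List.length_append, length_toList]
    lia
  have hnd : (S.toList ++ Q'.flatten).Nodup := S.nodup_toList.append hQ'.nodup
    fun v hv hv' ↦ G.irrefl (hSC v (mem_toList.1 hv) v (hQ'.mem v hv'))
  rw [← hct]
  refine containsCopy_wheelGraph_of_isChain (u := u) (hperm.nodup_iff.2 hnd) (fun w hw ↦ ?_) hch
    fun a ha b hb ↦ hSC a (mem_toList.1 (hhead a ha)) b (hlast b hb)
  rw [hperm.mem_iff, List.mem_append, mem_toList] at hw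
  exact hw.elim (hS w) fun h ↦ hC w (hQ'.mem w h)

end IsPathFamily

lemma containsCopy_wheelGraph_of_complete {u : V} {S C : Finset V} {k : ℕ}
    (hS : ∀ s ∈ S, G.Adj u s) (hC : ∀ c ∈ C, G.Adj u c) (hSC : ∀ s ∈ S, ∀ c ∈ C, G.Adj s c)
    (hSk : #S = k) (hCk : 2 * k ≤ #C) : ContainsCopy (wheelGraph (2 * k + 1)) G :=
  IsPathFamily.nil.containsCopy_wheelGraph hS hC hSC (Nat.zero_le _)
    (by simp only [List.flatten_nil, List.length_nil]; lia) hCk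

end Wheels

section Density

variable {V : Type*} [Fintype V] [DecidableEq V] {G : SimpleGraph V} [DecidableRel G.Adj]

lemma card_inter_neighborFinset_eq_sum (A : Finset V) (v : V) :
    #(A ∩ G.neighborFinset v) = ∑ w ∈ A, if G.Adj v w then 1 else 0 := by
  rw [← filter_mem_eq_inter, card_filter]
  simp only [SimpleGraph.mem_neighborFinset]

lemma sum_card_inter_neighborFinset_comm (A B : Finset V) :
    ∑ v ∈ A, #(B ∩ G.neighborFinset v) = ∑ w ∈ B, #(A ∩ G.neighborFinset w) := by
  simp only [card_inter_neighborFinset_eq_sum]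
  rw [sum_comm]
  simp only [G.adj_comm]

lemma sum_card_inter_neighborFinset_erase {B : Finset V} {v : V} (hv : v ∈ B) :
    ∑ w ∈ B.erase v, #(B.erase v ∩ G.neighborFinset w) + 2 * #(B ∩ G.neighborFinset v) =
      ∑ w ∈ B, #(B ∩ G.neighborFinset w) := by
  have herase : B.erase v ∩ G.neighborFinset v = B ∩ G.neighborFinset v := by
    rw [erase_inter, erase_eq_of_notMem (by simp)]
  rw [← add_sum_erase B _ hv, sum_card_inter_neighborFinset_comm (B.erase v) B,
    ← add_sum_erase B _ hv, herase]
  ring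

lemma exists_subset_min_degree {A : Finset V} {c : ℝ}
    (hA : c * #A < ∑ v ∈ A, #(A ∩ G.neighborFinset v)) :
    ∃ B ⊆ A, B.Nonempty ∧ ∀ v ∈ B, c / 2 ≤ #(B ∩ G.neighborFinset v) := by
  let f (B : Finset V) : ℝ := (∑ v ∈ B, #(B ∩ G.neighborFinset v) : ℕ) - c * #B
  obtain ⟨B, hBA, hB⟩ := exists_max_image A.powerset f (powerset_nonempty A)
  rw [mem_powerset] at hBA
  refine ⟨B, hBA, nonempty_iff_ne_empty.2 ?_, fun v hv ↦ ?_⟩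
  · rintro rfl
    have := hB A (mem_powerset_self A)
    simp only [f, sum_empty, card_empty, Nat.cast_zero, mul_zero, sub_zero] at this
    linarith
  · have hle := hB (B.erase v) (mem_powerset.2 ((erase_subset v B).trans hBA))
    have hcard : (#(B.erase v) : ℝ) + 1 = #B := mod_cast card_erase_add_one hv
    simp only [f, ← sum_card_inter_neighborFinset_erase hv, ← hcard] at hle
    push_cast at hle
    linarith

lemma degree_comap {α : Type*} [Fintype α] (f : α ↪ V) (a : α) :
    (G.comap f).degree a = #(univ.map f ∩ G.neighborFinset (f a)) := by
  rw [← SimpleGraph.card_neighborFinset_eq_degree, ← card_map f]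
  congr 1
  ext v
  simp only [Finset.mem_map, SimpleGraph.mem_neighborFinset, SimpleGraph.comap_adj, mem_inter,
    mem_univ, true_and]
  grind

end Density

section SparseNeighborhoods

lemma exists_complete_pair_of_isContained {α V : Type*} [Fintype α] {G : SimpleGraph V} {f : α ↪ V}
    {t : ℕ} (h : (SimpleGraph.completeEquipartiteGraph 2 t).IsContained (G.comap f)) :
    ∃ S C : Finset V, S ⊆ univ.map f ∧ C ⊆ univ.map f ∧ #S = t ∧ #C = t ∧
      ∀ s ∈ S, ∀ c ∈ C, G.Adj s c := by
  obtain ⟨φ⟩ := h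
  let part (i : Fin 2) : Fin t ↪ α := (Function.Embedding.sectR i _).trans φ.toEmbedding
  refine ⟨(univ.map (part 0)).map f, (univ.map (part 1)).map f, map_subset_map.2 (subset_univ _),
    map_subset_map.2 (subset_univ _), by simp, by simp, ?_⟩
  simp only [Finset.mem_map, mem_univ, true_and, exists_exists_eq_and, forall_exists_index,
    forall_apply_eq_imp_iff]
  intro i j
  exact φ.toHom.map_adj (SimpleGraph.completeEquipartiteGraph_adj.2 (by simp))

/-- A dense set contains a subset of large minimum degree, to which the Erdős–Stone theorem applies
in its bipartite case. -/
lemma eventually_exists_complete_pair {η : ℝ} (hη : 0 < η) (t : ℕ) :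
    ∀ᶠ n : ℕ in atTop, ∀ (G : SimpleGraph (Fin n)) [DecidableRel G.Adj] (A : Finset (Fin n)),
      η * n ^ 2 < ∑ v ∈ A, #(A ∩ G.neighborFinset v) →
      ∃ S C, S ⊆ A ∧ C ⊆ A ∧ #S = t ∧ #C = t ∧ ∀ s ∈ S, ∀ c ∈ C, G.Adj s c := by
  have hES := SimpleGraph.eventually_completeEquipartiteGraph_isContained_of_minDegree
    (half_pos hη) 1 t
  obtain ⟨N, hN⟩ := eventually_atTop.1 hES
  filter_upwards [(tendsto_natCast_atTop_atTop.const_mul_atTop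
    (half_pos hη)).eventually_ge_atTop (N : ℝ)] with n hn G _ A hA
  have hcard : ∀ B : Finset (Fin n), (#B : ℝ) ≤ n := fun B ↦ mod_cast card_finset_fin_le B
  obtain ⟨B, hBA, ⟨b, hb⟩, hB⟩ := exists_subset_min_degree (G := G) (A := A) (c := η * n) <|
    lt_of_le_of_lt (by nlinarith [hcard A, mul_nonneg hη.le (Nat.cast_nonneg (α := ℝ) n)]) hA
  have hNB : N ≤ #B := by
    have : (#(B ∩ G.neighborFinset b) : ℝ) ≤ #B := mod_cast card_le_card inter_subset_left
    have := hB b hb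
    exact_mod_cast (by linarith : (N : ℝ) ≤ #B)
  have : Nonempty (Fin #B) := ⟨⟨0, card_pos.2 ⟨b, hb⟩⟩⟩
  let f : Fin #B ↪ Fin n := (B.orderEmbOfFin rfl).toEmbedding
  have hf : univ.map f = B := B.map_orderEmbOfFin_univ rfl
  obtain ⟨S, C, hS, hC, h⟩ := exists_complete_pair_of_isContained <| hN #B hNB <| by
    obtain ⟨i, hi⟩ := (G.comap f).exists_minimal_degree_vertex
    have := hB (f i) (B.orderEmbOfFin_mem rfl i)
    rw [hi, degree_comap, hf]
    norm_num
    nlinarith [hcard B]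
  rw [hf] at hS hC
  exact ⟨S, C, hS.trans hBA, hC.trans hBA, h⟩

lemma eventually_sum_card_inter_neighborFinset_le (k : ℕ) {η : ℝ} (hη : 0 < η) :
    ∀ᶠ n : ℕ in atTop, ∀ (G : SimpleGraph (Fin n)) [DecidableRel G.Adj],
      WheelFree (2 * k + 1) G → ∀ u, (∑ v ∈ G.neighborFinset u,
        #(G.neighborFinset u ∩ G.neighborFinset v) : ℕ) ≤ η * n ^ 2 := by
  filter_upwards [eventually_exists_complete_pair hη (2 * k)] with n hn G _ hG u
  by_contra! hlt
  obtain ⟨S, C, hS, hC, hSk, hCk, hSC⟩ := hn G _ hlt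
  obtain ⟨S', hS', hSk'⟩ := exists_subset_card_eq (show k ≤ #S by lia)
  exact hG <| containsCopy_wheelGraph_of_complete
    (fun s hs ↦ (G.mem_neighborFinset u s).1 (hS (hS' hs)))
    (fun c hc ↦ (G.mem_neighborFinset u c).1 (hC hc)) (fun s hs ↦ hSC s (hS' hs)) hSk' hCk.ge

end SparseNeighborhoods

section Replacement

/-- The graph obtained from `G` by making `v` adjacent exactly to the vertices of `B` (other than
`v` itself). -/
def replaceNeighbors {V : Type*} (G : SimpleGraph V) (v : V) (B : Finset V) : SimpleGraph V :=
  G.deleteIncidenceSet v ⊔ SimpleGraph.fromRel fun p q ↦ p = v ∧ q ∈ B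

section

variable {V : Type*} {G : SimpleGraph V} {v : V} {B : Finset V}

lemma replaceNeighbors_adj_self (hv : v ∉ B) {w : V} :
    (replaceNeighbors G v B).Adj v w ↔ w ∈ B := by
  simp only [replaceNeighbors, SimpleGraph.sup_adj, SimpleGraph.deleteIncidenceSet_adj,
    SimpleGraph.fromRel_adj]
  grind

lemma replaceNeighbors_adj_of_ne {p q : V} (hp : p ≠ v) (hq : q ≠ v) :
    (replaceNeighbors G v B).Adj p q ↔ G.Adj p q := by
  simp [replaceNeighbors, SimpleGraph.deleteIncidenceSet_adj, hp, hq]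

lemma ContainsCopy.of_replaceNeighbors {α : Type*} [Fintype α] {F : SimpleGraph α} (hv : v ∉ B)
    (hB : ∀ X : Finset V, #X ≤ Fintype.card α → ∃ w ∉ X, ∀ p ∈ X, p ∈ B → G.Adj p w)
    (h : ContainsCopy F (replaceNeighbors G v B)) : ContainsCopy F G := by
  classical
  obtain ⟨f, hf⟩ := h
  obtain ⟨w, hw, hwB⟩ := hB (univ.map f) (by simp)
  have hfw (a : α) : f a ≠ w := fun h ↦ hw (h ▸ mem_map_of_mem f (mem_univ a))
  have hwB' (a : α) (ha : f a ∈ B) : G.Adj (f a) w := hwB _ (mem_map_of_mem f (mem_univ a)) ha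
  refine ⟨f.trans (Equiv.swap v w).toEmbedding, fun a b hab ↦ ?_⟩
  have hH := hf a b hab
  simp only [Function.Embedding.trans_apply, Equiv.coe_toEmbedding]
  by_cases ha : f a = v
  · have hb : f b ≠ v := fun hb ↦ hH.ne (ha.trans hb.symm)
    rw [ha, replaceNeighbors_adj_self hv] at hH
    rw [ha, Equiv.swap_apply_left, Equiv.swap_apply_of_ne_of_ne hb (hfw b)]
    exact (hwB' b hH).symm
  · rw [Equiv.swap_apply_of_ne_of_ne ha (hfw a)]
    by_cases hb : f b = v
    · rw [hb, SimpleGraph.adj_comm, replaceNeighbors_adj_self hv] at hH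
      rw [hb, Equiv.swap_apply_left]
      exact hwB' a hH
    · rw [Equiv.swap_apply_of_ne_of_ne hb (hfw b)]
      exact (replaceNeighbors_adj_of_ne ha hb).1 hH

end

lemma adjMatrix_form_eq_erase_add {V : Type*} [Fintype V] [DecidableEq V] (G : SimpleGraph V)
    [DecidableRel G.Adj] (x : V → ℝ) (v : V) :
    x ⬝ᵥ G.adjMatrix ℝ *ᵥ x =
      (∑ p ∈ univ.erase v, ∑ q ∈ univ.erase v, if G.Adj p q then x p * x q else 0) +
        2 * (x v * ∑ u ∈ G.neighborFinset v, x u) := by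
  have hrow : ∑ q ∈ univ.erase v, (if G.Adj v q then x v * x q else 0) =
      x v * ∑ u ∈ G.neighborFinset v, x u := by
    rw [SimpleGraph.neighborFinset_eq_filter, sum_filter, mul_sum,
      ← add_sum_erase univ _ (mem_univ v)]
    simp
  have hcol : ∑ p ∈ univ.erase v, (if G.Adj p v then x p * x v else 0) =
      x v * ∑ u ∈ G.neighborFinset v, x u := by
    simp only [← hrow, G.adj_comm, mul_comm]
  simp only [SimpleGraph.dotProduct_mulVec_adjMatrix, ← add_sum_erase univ _ (mem_univ v),
    sum_add_distrib, hrow, hcol, G.irrefl, if_false]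
  ring

lemma update_dotProduct_update {V : Type*} [Fintype V] [DecidableEq V] (x : V → ℝ) (v : V) (s : ℝ) :
    Function.update x v s ⬝ᵥ Function.update x v s + x v ^ 2 = x ⬝ᵥ x + s ^ 2 := by
  have hrest : ∑ w ∈ univ.erase v, Function.update x v s w * Function.update x v s w =
      ∑ w ∈ univ.erase v, x w * x w :=
    sum_congr rfl fun w hw ↦ by rw [Function.update_of_ne (ne_of_mem_erase hw)]
  simp only [dotProduct, ← add_sum_erase univ _ (mem_univ v), hrest, Function.update_self]
  ring

lemma adjMatrix_form_replaceNeighbors {V : Type*} [Fintype V] [DecidableEq V] (G : SimpleGraph V)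
    [DecidableRel G.Adj] {v : V} {B : Finset V} [DecidableRel (replaceNeighbors G v B).Adj]
    (hv : v ∉ B) (x : V → ℝ) (s : ℝ) :
    Function.update x v s ⬝ᵥ (replaceNeighbors G v B).adjMatrix ℝ *ᵥ Function.update x v s +
        2 * (x v * ∑ u ∈ G.neighborFinset v, x u) =
      x ⬝ᵥ G.adjMatrix ℝ *ᵥ x + 2 * (s * ∑ w ∈ B, x w) := by
  have hN : (replaceNeighbors G v B).neighborFinset v = B := by
    ext w
    simp [replaceNeighbors_adj_self hv]
  have hsum : ∑ w ∈ B, Function.update x v s w = ∑ w ∈ B, x w :=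
    sum_congr rfl fun w hw ↦ Function.update_of_ne (ne_of_mem_of_not_mem hw hv) ..
  have hrest : (∑ p ∈ univ.erase v, ∑ q ∈ univ.erase v,
        if (replaceNeighbors G v B).Adj p q then
          Function.update x v s p * Function.update x v s q else 0) =
      ∑ p ∈ univ.erase v, ∑ q ∈ univ.erase v, if G.Adj p q then x p * x q else 0 := by
    refine sum_congr rfl fun p hp ↦ sum_congr rfl fun q hq ↦ ?_
    have hp := ne_of_mem_erase hp
    have hq := ne_of_mem_erase hq
    simp only [replaceNeighbors_adj_of_ne hp hq, Function.update_of_ne hp, Function.update_of_ne hq]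
  rw [adjMatrix_form_eq_erase_add _ _ v, adjMatrix_form_eq_erase_add G x v, hN, hsum, hrest,
    Function.update_self]
  ring

/-- Otherwise replacing the neighbourhood of `v` by `B` would give a wheel-free graph of larger
spectral radius. -/
lemma IsSpexWheel.sum_le_of_forall_exists_adj {n t : ℕ} {G : SimpleGraph (Fin n)}
    [DecidableRel G.Adj] (hG : IsSpexWheel t G) (hpos : 0 < lam1 G) {x : Fin n → ℝ}
    (hx : IsPerronVector G (lam1 G) x) {v : Fin n} {B : Finset (Fin n)} (hv : v ∉ B)
    (hB : ∀ X : Finset (Fin n), #X ≤ t → ∃ w ∉ X, ∀ p ∈ X, p ∈ B → G.Adj p w) :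
    ∑ w ∈ B, x w ≤ lam1 G * x v := by
  classical
  set s := (∑ w ∈ B, x w) / lam1 G with hs
  have hS : ∑ w ∈ B, x w = lam1 G * s := by rw [hs]; field_simp
  set y := Function.update x v s
  have hlam : lam1 (replaceNeighbors G v B) ≤ lam1 G :=
    hG.2 _ fun hH ↦ hG.1 (hH.of_replaceNeighbors hv (by simpa using hB))
  have hform : y ⬝ᵥ (replaceNeighbors G v B).adjMatrix ℝ *ᵥ y ≤ lam1 G * (y ⬝ᵥ y) :=
    (adjMatrix_form_le_lam1_mul _ y).trans <|
      mul_le_mul_of_nonneg_right hlam (dotProduct_self_star_nonneg y)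
  have hnew := adjMatrix_form_replaceNeighbors G hv x s
  rw [hx.form_eq, hx.sum_neighborFinset, hS] at hnew
  have hnorm := update_dotProduct_update x v s
  rw [hS]
  have hsq : s ^ 2 ≤ x v ^ 2 := le_of_mul_le_mul_left (by nlinarith) hpos
  exact mul_le_mul_of_nonneg_left (le_of_sq_le_sq hsq (hx.nonneg v)) hpos.le

end Replacement

section AlmostBiclique

/-- `A` and `B` are disjoint, and each vertex of one of them is adjacent to all but at most `m`
vertices of the other. The extremal graphs are shown to have this shape, with `B = Aᶜ`. -/
structure IsAlmostBiclique {V : Type*} [Fintype V] [DecidableEq V] (G : SimpleGraph V)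
    [DecidableRel G.Adj] (A B : Finset V) (m : ℕ) : Prop where
  disjoint : Disjoint A B
  card_sdiff_le_left : ∀ v ∈ A, #(B \ G.neighborFinset v) ≤ m
  card_sdiff_le_right : ∀ w ∈ B, #(A \ G.neighborFinset w) ≤ m

variable {V : Type*} [Fintype V] [DecidableEq V] {G : SimpleGraph V} [DecidableRel G.Adj]

lemma IsAlmostBiclique.symm {A B : Finset V} {m : ℕ} (h : IsAlmostBiclique G A B m) :
    IsAlmostBiclique G B A m :=
  ⟨h.disjoint.symm, h.card_sdiff_le_right, h.card_sdiff_le_left⟩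

/-- The vertices of `D` that are adjacent to all vertices of `S`. -/
def commonNeighborsIn {V : Type*} (G : SimpleGraph V) [DecidableRel G.Adj] (S D : Finset V) :
    Finset V :=
  {d ∈ D | ∀ s ∈ S, G.Adj s d}

lemma mem_commonNeighborsIn {V : Type*} {G : SimpleGraph V} [DecidableRel G.Adj] {S D : Finset V}
    {d : V} : d ∈ commonNeighborsIn G S D ↔ d ∈ D ∧ ∀ s ∈ S, G.Adj s d :=
  mem_filter

lemma card_le_card_commonNeighborsIn_add {S D : Finset V} {m : ℕ}
    (h : ∀ s ∈ S, #(D \ G.neighborFinset s) ≤ m) :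
    #D ≤ #(commonNeighborsIn G S D) + #S * m := by
  have hD : D ⊆ commonNeighborsIn G S D ∪ S.biUnion fun s ↦ D \ G.neighborFinset s := by
    intro d hd
    by_cases hS : ∀ s ∈ S, G.Adj s d
    · exact mem_union_left _ (mem_commonNeighborsIn.2 ⟨hd, hS⟩)
    · push Not at hS
      obtain ⟨s, hs, hsd⟩ := hS
      exact mem_union_right _ (mem_biUnion.2 ⟨s, hs, by simpa [hd] using hsd⟩)
  calc #D ≤ _ := card_le_card hD
    _ ≤ _ := card_union_le ..
    _ ≤ _ := Nat.add_le_add_left (card_biUnion_le_card_mul _ _ _ h) _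

end AlmostBiclique

lemma card_filter_lt_le_of_sum_le_sq {ι : Type*} {s : Finset ι} {f : ι → ℝ} {c : ℝ} (hc : 0 < c)
    (hf : ∀ v, 0 ≤ f v) (hs : ∑ v ∈ s, f v ≤ c ^ 2) : (#{v ∈ s | ¬ f v ≤ c} : ℝ) ≤ c := by
  refine le_of_mul_le_mul_right ?_ hc
  calc (#{v ∈ s | ¬ f v ≤ c} : ℝ) * c = #{v ∈ s | ¬ f v ≤ c} • c := (nsmul_eq_mul ..).symm
    _ ≤ ∑ v ∈ s with ¬ f v ≤ c, f v :=
      card_nsmul_le_sum _ _ _ fun v hv ↦ (not_le.1 (mem_filter.1 hv).2).le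
    _ ≤ ∑ v ∈ s, f v := sum_le_sum_of_subset_of_nonneg (filter_subset ..) fun v _ _ ↦ hf v
    _ ≤ c * c := hs.trans_eq (sq c)

section NearBipartition

variable {V : Type*} [Fintype V] [DecidableEq V] {G : SimpleGraph V} [DecidableRel G.Adj]
  {μ : ℝ} {x : V → ℝ}

/-- Two steps of the eigenvalue equation starting from a vertex where the entry is maximal. -/
lemma IsPerronVector.sq_le_sum_card_add_sum (hx : IsPerronVector G μ x) {u : V} (hu : x u = 1) :
    μ ^ 2 ≤ ((∑ v ∈ G.neighborFinset u, #(G.neighborFinset u ∩ G.neighborFinset v) : ℕ) : ℝ) +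
      ∑ v ∈ G.neighborFinset u, ∑ w ∈ (G.neighborFinset u)ᶜ ∩ G.neighborFinset v, x w := by
  set A := G.neighborFinset u with hA
  have hμ : ∑ v ∈ A, x v = μ := by rw [hA, hx.sum_neighborFinset, hu, mul_one]
  calc μ ^ 2 = ∑ v ∈ A, ∑ w ∈ G.neighborFinset v, x w := by
        simp only [hx.sum_neighborFinset, ← mul_sum, hμ, sq]
    _ = ∑ v ∈ A, (∑ w ∈ A ∩ G.neighborFinset v, x w + ∑ w ∈ Aᶜ ∩ G.neighborFinset v, x w) := by
        refine sum_congr rfl fun v _ ↦ ?_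
        rw [← sum_inter_add_sum_sdiff _ A, inter_comm, sdiff_eq_inter_compl, inter_comm _ Aᶜ]
    _ ≤ ∑ v ∈ A, ((#(A ∩ G.neighborFinset v) : ℝ) + ∑ w ∈ Aᶜ ∩ G.neighborFinset v, x w) := by
        gcongr
        exact hx.sum_le_card _
    _ = _ := by rw [sum_add_distrib, Nat.cast_sum]

lemma IsPerronVector.sum_cross_add_sum_card_sdiff_le (hx : IsPerronVector G μ x) (A B : Finset V) :
    ∑ v ∈ A, ∑ w ∈ B ∩ G.neighborFinset v, x w + ∑ v ∈ A, (#(B \ G.neighborFinset v) : ℝ) ≤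
      #A * #B := by
  rw [← sum_add_distrib, ← nsmul_eq_mul]
  refine sum_le_card_nsmul _ _ _ fun v _ ↦ ?_
  have := hx.sum_le_card (B ∩ G.neighborFinset v)
  rw [← card_inter_add_card_sdiff B (G.neighborFinset v)]
  push_cast
  linarith

lemma IsPerronVector.sum_cross_le (hx : IsPerronVector G μ x) (A B : Finset V) :
    ∑ v ∈ A, ∑ w ∈ B ∩ G.neighborFinset v, x w ≤ #A * ∑ w ∈ B, x w := by
  rw [← nsmul_eq_mul]
  exact sum_le_card_nsmul _ _ _ fun v _ ↦
    sum_le_sum_of_subset_of_nonneg inter_subset_left fun w _ _ ↦ hx.nonneg w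

lemma near_balanced_of_sq_le {a b n μ P ε : ℝ} (hab : a + b = n) (hn : 0 < n) (hε : 0 < ε)
    (hl : n / 2 ≤ μ) (hsq : μ ^ 2 ≤ ε ^ 2 * n ^ 2 + P) (hP : P ≤ a * b) :
    (1 / 2 - ε) * n ≤ a ∧ (1 / 2 - ε) * n ≤ b ∧ μ ≤ (1 / 2 + ε) * n := by
  have hl2 : (n / 2) ^ 2 ≤ μ ^ 2 := by gcongr
  have hdiff : (a - b) ^ 2 ≤ (2 * ε * n) ^ 2 := by
    have : (a - b) ^ 2 = n ^ 2 - 4 * (a * b) := by rw [← hab]; ring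
    linarith
  obtain ⟨hd₁, hd₂⟩ := abs_le_of_sq_le_sq' hdiff (by positivity)
  refine ⟨by linarith, by linarith, le_of_sq_le_sq ?_ (by positivity)⟩
  have : 4 * (a * b) ≤ n ^ 2 := by rw [← hab]; nlinarith [sq_nonneg (a - b)]
  nlinarith [mul_pos hε (mul_pos hn hn)]

lemma IsPerronVector.near_bipartition (hx : IsPerronVector G μ x) {u : V} (hu : x u = 1) {n ε : ℝ}
    (hcard : Fintype.card V = n) (hn : 0 < n) (hε : 0 < ε) (hl : n / 2 ≤ μ)
    (hsp : ((∑ v ∈ G.neighborFinset u, #(G.neighborFinset u ∩ G.neighborFinset v) : ℕ) : ℝ) ≤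
      ε ^ 2 * n ^ 2) :
    (1 / 2 - ε) * n ≤ #(G.neighborFinset u) ∧ (1 / 2 - ε) * n ≤ #(G.neighborFinset u)ᶜ ∧
      ∑ v ∈ G.neighborFinset u, (#((G.neighborFinset u)ᶜ \ G.neighborFinset v) : ℝ) ≤
        ε ^ 2 * n ^ 2 ∧
      (1 / 2 - ε) * n ≤ ∑ w ∈ (G.neighborFinset u)ᶜ, x w ∧ μ ≤ (1 / 2 + ε) * n := by
  have hsq := hx.sq_le_sum_card_add_sum hu
  set A := G.neighborFinset u
  have hab : (#A : ℝ) + #Aᶜ = n := by rw [← hcard]; exact_mod_cast card_add_card_compl A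
  have hP₁ := hx.sum_cross_add_sum_card_sdiff_le A Aᶜ
  have hP₂ := hx.sum_cross_le A Aᶜ
  set P := ∑ v ∈ A, ∑ w ∈ Aᶜ ∩ G.neighborFinset v, x w
  have hM : 0 ≤ ∑ v ∈ A, (#(Aᶜ \ G.neighborFinset v) : ℝ) :=
    Finset.sum_nonneg fun v _ ↦ by positivity
  have hl2 : (n / 2) ^ 2 ≤ μ ^ 2 := by gcongr
  obtain ⟨ha, hb, hμ⟩ := near_balanced_of_sq_le hab hn hε hl (by linarith : _ ≤ _ + P) (by linarith)
  refine ⟨ha, hb, ?_, ?_, hμ⟩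
  · nlinarith [sq_nonneg ((#A : ℝ) - #Aᶜ)]
  · by_contra! hcon
    have hA : (#A : ℝ) ≤ (1 / 2 + ε) * n := by linarith
    have hT : 0 ≤ ∑ w ∈ Aᶜ, x w := Finset.sum_nonneg fun w _ ↦ hx.nonneg w
    nlinarith [mul_le_mul_of_nonneg_right hA hT, mul_pos hε hn]

lemma exists_isAlmostBiclique_of_sum_card_sdiff_le {A B : Finset V} (hAB : Disjoint A B) {c : ℝ}
    (hc : 0 < c) (hsum : ∑ v ∈ A, (#(B \ G.neighborFinset v) : ℝ) ≤ c ^ 2) :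
    ∃ A' ⊆ A, ∃ B' ⊆ B, (#(A \ A') : ℝ) ≤ c ∧ (#(B \ B') : ℝ) ≤ c ∧
      IsAlmostBiclique G A' B' ⌊c⌋₊ := by
  have hsum' : ∑ w ∈ B, (#(A \ G.neighborFinset w) : ℝ) ≤ c ^ 2 := by
    refine le_of_eq_of_le ?_ hsum
    have := sum_card_bipartiteAbove_eq_sum_card_bipartiteBelow (s := A) (t := B)
      fun v w ↦ ¬ G.Adj v w
    simp only [bipartiteAbove, bipartiteBelow] at this
    simp only [sdiff_eq_filter, SimpleGraph.mem_neighborFinset]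
    simp only [G.adj_comm] at this ⊢
    exact_mod_cast this.symm
  refine ⟨{v ∈ A | (#(B \ G.neighborFinset v) : ℝ) ≤ c}, filter_subset ..,
    {w ∈ B | (#(A \ G.neighborFinset w) : ℝ) ≤ c}, filter_subset .., ?_, ?_, ?_, ?_, ?_⟩
  · rw [← filter_not]
    exact card_filter_lt_le_of_sum_le_sq hc (fun v ↦ by positivity) hsum
  · rw [← filter_not]
    exact card_filter_lt_le_of_sum_le_sq hc (fun v ↦ by positivity) hsum'
  · exact hAB.mono (filter_subset ..) (filter_subset ..)
  · exact fun v hv ↦ (card_le_card (sdiff_subset_sdiff (filter_subset ..) le_rfl)).trans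
      (Nat.le_floor (mem_filter.1 hv).2)
  · exact fun w hw ↦ (card_le_card (sdiff_subset_sdiff (filter_subset ..) le_rfl)).trans
      (Nat.le_floor (mem_filter.1 hw).2)

lemma IsPerronVector.exists_isAlmostBiclique (hx : IsPerronVector G μ x) {n ε : ℝ}
    (hcard : Fintype.card V = n) (hn : 0 < n) (hε : 0 < ε) (hl : n / 2 ≤ μ)
    (hsp : ∀ u, ((∑ v ∈ G.neighborFinset u, #(G.neighborFinset u ∩ G.neighborFinset v) : ℕ) : ℝ) ≤
      ε ^ 2 * n ^ 2) :
    μ ≤ (1 / 2 + ε) * n ∧ ∃ A B, IsAlmostBiclique G A B ⌊ε * n⌋₊ ∧ (1 / 2 - 2 * ε) * n ≤ #A ∧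
      (1 / 2 - 2 * ε) * n ≤ #B ∧ (1 / 2 - 2 * ε) * n ≤ ∑ w ∈ B, x w := by
  obtain ⟨u, hu⟩ := hx.exists_eq_one
  obtain ⟨ha, hb, hmiss, hsum, hμ⟩ := hx.near_bipartition hu hcard hn hε hl (hsp u)
  rw [← mul_pow] at hmiss
  obtain ⟨A, hA, B, hB, hA', hB', hAB⟩ :=
    exists_isAlmostBiclique_of_sum_card_sdiff_le disjoint_compl_right (mul_pos hε hn) hmiss
  refine ⟨hμ, A, B, hAB, ?_, ?_, ?_⟩
  · rw [cast_card_sdiff hA] at hA'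
    linarith
  · rw [cast_card_sdiff hB] at hB'
    linarith
  · rw [← sum_sdiff hB] at hsum
    linarith [hx.sum_le_card ((G.neighborFinset u)ᶜ \ B)]

end NearBipartition

section Partition

lemma card_add_card_add_card_le {V : Type*} [Fintype V] [DecidableEq V] {A B : Finset V}
    (hAB : Disjoint A B) (N : Finset V) :
    #N + #A + #B ≤ #(A ∩ N) + #(B ∩ N) + Fintype.card V := by
  have hinter : #((A ∪ B) ∩ N) = #(A ∩ N) + #(B ∩ N) := by
    rw [union_inter_distrib_right, card_union_of_disjoint (hAB.mono inter_subset_left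
      inter_subset_left)]
  have hunion := card_union_add_card_inter (A ∪ B) N
  rw [hinter, card_union_of_disjoint hAB] at hunion
  have := card_le_univ ((A ∪ B) ∪ N)
  omega

lemma IsSpexWheel.sum_sub_one_le {n t : ℕ} {G : SimpleGraph (Fin n)} [DecidableRel G.Adj]
    (hG : IsSpexWheel t G) (hpos : 0 < lam1 G) {x : Fin n → ℝ} (hx : IsPerronVector G (lam1 G) x)
    {A B : Finset (Fin n)} {m : ℕ} (hAB : IsAlmostBiclique G A B m) (hA : t * (m + 1) < #A)
    (v : Fin n) : ∑ w ∈ B, x w - 1 ≤ lam1 G * x v := by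
  have herase : ∑ w ∈ B, x w - 1 ≤ ∑ w ∈ B.erase v, x w := by
    by_cases hv : v ∈ B
    · rw [← sum_erase_add _ _ hv]
      linarith [hx.le_one v]
    · rw [erase_eq_of_notMem hv]
      linarith
  refine herase.trans (hG.sum_le_of_forall_exists_adj hpos hx (notMem_erase v B) fun X hX ↦ ?_)
  have hcommon := card_le_card_commonNeighborsIn_add (S := X ∩ B) fun s hs ↦
    hAB.card_sdiff_le_right s (mem_inter.1 hs).2
  have hXB : #(X ∩ B) * m ≤ t * m :=
    Nat.mul_le_mul_right _ ((card_le_card inter_subset_left).trans hX)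
  obtain ⟨w, hw, hwX⟩ :=
    exists_mem_notMem_of_card_lt_card (s := X) (t := commonNeighborsIn G (X ∩ B) A) (by lia)
  exact ⟨w, hwX, fun p hp hpB ↦
    (mem_commonNeighborsIn.1 hw).2 p (mem_inter.2 ⟨hp, mem_of_mem_erase hpB⟩)⟩

lemma WheelFree.card_inter_lt_of_le_card_inter {n k m : ℕ} {G : SimpleGraph (Fin n)}
    [DecidableRel G.Adj] (hG : WheelFree (2 * k + 1) G) {A B : Finset (Fin n)}
    (hAB : IsAlmostBiclique G A B m) {v : Fin n} (hv : k ≤ #(A ∩ G.neighborFinset v)) :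
    #(B ∩ G.neighborFinset v) < k * m + 2 * k := by
  by_contra! hB
  obtain ⟨S, hS, hSk⟩ := exists_subset_card_eq hv
  have hcommon := card_le_card_commonNeighborsIn_add (S := S) (D := B ∩ G.neighborFinset v)
    fun s hs ↦ (card_le_card (sdiff_subset_sdiff inter_subset_left le_rfl)).trans
      (hAB.card_sdiff_le_left s (mem_inter.1 (hS hs)).1)
  rw [hSk] at hcommon
  refine hG (containsCopy_wheelGraph_of_complete (u := v)
    (C := commonNeighborsIn G S (B ∩ G.neighborFinset v)) (fun s hs ↦ ?_) (fun c hc ↦ ?_)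
    (fun s hs c hc ↦ (mem_commonNeighborsIn.1 hc).2 s hs) hSk (by omega))
  · simpa using (mem_inter.1 (hS hs)).2
  · simpa using (mem_inter.1 (mem_commonNeighborsIn.1 hc).1).2

/-- A vertex is put on the side of `A` when it has few neighbours in `A`. -/
lemma WheelFree.exists_isAlmostBiclique_compl {n k m m' : ℕ} {G : SimpleGraph (Fin n)}
    [DecidableRel G.Adj] (hG : WheelFree (2 * k + 1) G) {A B : Finset (Fin n)}
    (hAB : IsAlmostBiclique G A B m) (hA : k + m ≤ #A) (hB : k * m + 2 * k + m ≤ #B)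
    (hdeg : ∀ v, 2 * Fintype.card (Fin n) + k * m + 2 * k ≤
      #A + #B + min #A #B + #(G.neighborFinset v) + m') :
    ∃ L, A ⊆ L ∧ B ⊆ Lᶜ ∧ IsAlmostBiclique G L Lᶜ m' := by
  set L : Finset (Fin n) := {v | #(A ∩ G.neighborFinset v) < k} with hL
  have hsplit (D : Finset (Fin n)) (v : Fin n) := card_inter_add_card_sdiff D (G.neighborFinset v)
  have hfew {v : Fin n} (hv : v ∉ L) : #(B ∩ G.neighborFinset v) < k * m + 2 * k :=
    hG.card_inter_lt_of_le_card_inter hAB (by simpa [hL] using hv)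
  have hAL : A ⊆ L := by
    intro v hv
    by_contra hvL
    have := hfew hvL
    have := hAB.card_sdiff_le_left v hv
    have := hsplit B v
    omega
  have hBL : B ⊆ Lᶜ := by
    intro v hv
    simp only [hL, mem_compl, mem_filter_univ, not_lt]
    have := hAB.card_sdiff_le_right v hv
    have := hsplit A v
    omega
  have hcL := card_le_card hAL
  have hcR := card_le_card hBL
  have hLR := card_add_card_compl L
  refine ⟨L, hAL, hBL, disjoint_compl_right, fun v hv ↦ ?_, fun v hv ↦ ?_⟩
  · have hlt : #(A ∩ G.neighborFinset v) < k := by simpa [hL] using hv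
    have := card_le_card (inter_subset_inter_right hBL : _ ⊆ Lᶜ ∩ G.neighborFinset v)
    have := hsplit Lᶜ v
    have := card_add_card_add_card_le hAB.disjoint (G.neighborFinset v)
    have := hdeg v
    lia
  · have := hfew (mem_compl.1 hv)
    have := card_le_card (inter_subset_inter_right hAL : _ ⊆ L ∩ G.neighborFinset v)
    have := hsplit L v
    have := card_add_card_add_card_le hAB.disjoint (G.neighborFinset v)
    have := hdeg v
    lia

lemma IsSpexWheel.near_one_le_perron {n t : ℕ} {G : SimpleGraph (Fin n)} [DecidableRel G.Adj]
    (hG : IsSpexWheel t G) {x : Fin n → ℝ} (hx : IsPerronVector G (lam1 G) x)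
    {A B : Finset (Fin n)} {m : ℕ} (hAB : IsAlmostBiclique G A B m) (hA : t * (m + 1) < #A)
    {ε : ℝ} (hε : 0 < ε) (hε8 : 8 * ε ≤ 1) (hnε : 1 ≤ ε * n) (hl : (n : ℝ) / 2 ≤ lam1 G)
    (hμ : lam1 G ≤ (1 / 2 + ε) * n) (hsum : (1 / 2 - 2 * ε) * n ≤ ∑ w ∈ B, x w) (v : Fin n) :
    1 - 8 * ε ≤ x v ∧ (1 / 2 - 3 * ε) * n ≤ #(G.neighborFinset v) := by
  have hn : (0 : ℝ) < n := pos_of_mul_pos_right (by linarith) hε.le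
  have hpos : 0 < lam1 G := by linarith
  have hlow := hG.sum_sub_one_le hpos hx hAB hA v
  constructor
  · refine le_of_mul_le_mul_left ?_ hpos
    have := mul_le_mul_of_nonneg_right hμ (sub_nonneg.2 hε8)
    nlinarith [mul_pos hε (mul_pos hε hn)]
  · rw [← hx.sum_neighborFinset] at hlow
    linarith [hx.sum_le_card (G.neighborFinset v)]

theorem eventually_exists_isAlmostBiclique_compl (k : ℕ) {γ : ℝ} (hγ : 0 < γ) :
    ∀ᶠ n : ℕ in atTop, ∀ (G : SimpleGraph (Fin n)) [DecidableRel G.Adj],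
      IsSpexWheel (2 * k + 1) G → (n : ℝ) / 2 ≤ lam1 G →
      ∃ (x : Fin n → ℝ) (L : Finset (Fin n)), IsPerronVector G (lam1 G) x ∧ (∀ v, 1 - γ ≤ x v) ∧
        IsAlmostBiclique G L Lᶜ ⌊γ * n⌋₊ ∧ (1 / 2 - γ) * n ≤ #L ∧ (1 / 2 - γ) * n ≤ #Lᶜ := by
  set ε : ℝ := min γ 1 / (100 * (k + 1)) with hε'
  have hε : 0 < ε := div_pos (lt_min hγ one_pos) (by positivity)
  have hεeq : 100 * (k + 1) * ε = min γ 1 := by rw [hε']; field_simp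
  have hεk : 100 * (k + 1) * ε ≤ 1 := hεeq ▸ min_le_right _ _
  have hεγ : 100 * (k + 1) * ε ≤ γ := hεeq ▸ min_le_left _ _
  have hkε : 0 ≤ k * ε := by positivity
  filter_upwards [eventually_sum_card_inter_neighborFinset_le k (pow_pos hε 2),
    (tendsto_natCast_atTop_atTop.const_mul_atTop hε).eventually_ge_atTop (3 * k + 3 : ℝ)]
    with n hsp hnε G _ hG hl
  have hn : (0 : ℝ) < n := pos_of_mul_pos_right (lt_of_lt_of_le (by positivity) hnε) hε.le
  have hεkn : 100 * (k + 1) * ε * n ≤ n := by nlinarith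
  have hεγn : 100 * (k + 1) * ε * n ≤ γ * n := by gcongr
  have hkεn : 0 ≤ k * ε * n := by positivity
  obtain ⟨x, hx⟩ := exists_isPerronVector G (by exact_mod_cast hn)
  obtain ⟨hμ, A, B, hAB, hA, hB, hsum⟩ :=
    hx.exists_isAlmostBiclique (by simp) hn hε hl (hsp G hG.1)
  have hm : (⌊ε * n⌋₊ : ℝ) ≤ ε * n := Nat.floor_le (by positivity)
  have hkm : k * (⌊ε * n⌋₊ : ℝ) ≤ k * (ε * n) := by gcongr
  have hm' : γ * n < ⌊γ * n⌋₊ + 1 := Nat.lt_floor_add_one _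
  have hent := hG.near_one_le_perron hx hAB (by rify; linarith) hε (by linarith)
    (by linarith) hl hμ hsum
  obtain ⟨L, hAL, hBL, hL⟩ := hG.1.exists_isAlmostBiclique_compl (m' := ⌊γ * n⌋₊) hAB
    (by rify; linarith) (by rify; linarith) (fun v ↦ by
      have := (hent v).2
      have : (1 / 2 - 2 * ε) * n ≤ (min #A #B : ℕ) := by rw [Nat.cast_min]; exact le_min hA hB
      rw [Fintype.card_fin]
      rify at *
      linarith)
  have hcL : (#A : ℝ) ≤ #L := by exact_mod_cast card_le_card hAL
  have hcR : (#B : ℝ) ≤ #Lᶜ := by exact_mod_cast card_le_card hBL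
  exact ⟨x, L, hx, fun v ↦ by linarith [(hent v).1], hL, by linarith, by linarith⟩

end Partition

section PathPacking

variable {V : Type*} [Fintype V] [DecidableEq V] {G : SimpleGraph V} [DecidableRel G.Adj]

/-- `R` contains a path of `G` on `l` vertices all of which are equal or adjacent to `v`. These
paths are the pieces of which path families are built. -/
def HasLocalPath {V : Type*} (G : SimpleGraph V) (R : Finset V) (l : ℕ) (v : V) : Prop :=
  ∃ q : List V, q.length = l ∧ q.Nodup ∧ q.IsChain G.Adj ∧ ∀ s ∈ q, s ∈ R ∧ (s = v ∨ G.Adj v s)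

lemma hasLocalPath_two {R : Finset V} {v : V} (hvR : v ∈ R)
    (hv : 1 ≤ #(R ∩ G.neighborFinset v)) : HasLocalPath G R 2 v := by
  obtain ⟨w, hw⟩ := card_pos.1 hv
  rw [mem_inter, SimpleGraph.mem_neighborFinset] at hw
  exact ⟨[v, w], rfl, by simp [hw.2.ne], by simp [hw.2], by simp [hvR, hw]⟩

lemma hasLocalPath_three {R : Finset V} {v : V} (hvR : v ∈ R)
    (hv : 2 ≤ #(R ∩ G.neighborFinset v)) : HasLocalPath G R 3 v := by
  obtain ⟨w, hw, w', hw', hne⟩ := one_lt_card.1 hv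
  rw [mem_inter, SimpleGraph.mem_neighborFinset] at hw hw'
  exact ⟨[w, v, w'], rfl, by simp [hw.2.ne', hw'.2.ne, hne], by simp [hw.2.symm, hw'.2],
    by simp [hvR, hw, hw']⟩

/-- Greedy choice: only boundedly many centres have a path that meets the previous ones or leaves
`C`. -/
lemma exists_isPathFamily_of_hasLocalPath {R C D : Finset V} {d l t : ℕ} (hl : 0 < l)
    (hdeg : ∀ v ∈ R, #(R ∩ G.neighborFinset v) ≤ d) (hCR : C ⊆ R) (hDR : D ⊆ R)
    (hpath : ∀ v ∈ D, HasLocalPath G R l v) (hD : (t * l + #(R \ C)) * (d + 1) < #D) :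
    ∃ Q, IsPathFamily G C Q ∧ Q.length = t ∧ Q.flatten.length = t * l := by
  induction t with
  | zero => exact ⟨[], .nil, by simp⟩
  | succ t ih =>
    have hmono : t * l + #(R \ C) ≤ (t + 1) * l + #(R \ C) := by gcongr; lia
    obtain ⟨Q, hQ, hlen, htot⟩ := ih ((Nat.mul_le_mul_right _ hmono).trans_lt hD)
    set X := Q.flatten.toFinset ∪ (R \ C)
    have hXR : X ⊆ R :=
      union_subset (fun s hs ↦ hCR (hQ.mem s (List.mem_toFinset.1 hs))) sdiff_subset
    have hX : #X ≤ (t + 1) * l + #(R \ C) :=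
      (card_union_le _ _).trans <| by grw [List.toFinset_card_le, htot, hmono]
    have hbad : #(X ∪ X.biUnion fun s ↦ R ∩ G.neighborFinset s) ≤ #X * (d + 1) := by
      grw [card_union_le, card_biUnion_le_card_mul _ _ d fun s hs ↦ hdeg s (hXR hs)]
      lia
    obtain ⟨v, hvD, hv⟩ := exists_mem_notMem_of_card_lt_card <|
      (hbad.trans (Nat.mul_le_mul_right _ hX)).trans_lt hD
    obtain ⟨q, hqlen, hqnd, hqch, hq⟩ := hpath v hvD
    have hqX : ∀ s ∈ q, s ∈ R ∧ s ∉ X := by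
      refine fun s hs ↦ ⟨(hq s hs).1, fun hsX ↦ hv ?_⟩
      obtain rfl | hadj := (hq s hs).2
      · exact mem_union_left _ hsX
      · exact mem_union_right _ (mem_biUnion.2 ⟨s, hsX, by simp [hDR hvD, hadj.symm]⟩)
    refine ⟨q :: Q, hQ.cons (List.ne_nil_of_length_pos (by lia)) hqnd hqch (fun s hs ↦ ?_)
      fun s hs hsQ ↦ ?_, by simp [hlen], ?_⟩
    · by_contra hsC
      exact (hqX s hs).2 (mem_union_right _ (mem_sdiff.2 ⟨(hqX s hs).1, hsC⟩))
    · exact (hqX s hs).2 (mem_union_left _ (List.mem_toFinset.2 hsQ))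
    · rw [List.flatten_cons, List.length_append, htot, hqlen]
      ring

end PathPacking

section InnerDegree

variable {n k m : ℕ} {G : SimpleGraph (Fin n)} [DecidableRel G.Adj] {A B : Finset (Fin n)}

lemma IsAlmostBiclique.card_le_card_commonNeighborsIn_insert_add (hAB : IsAlmostBiclique G A B m)
    {u : Fin n} (hu : u ∈ A) {S : Finset (Fin n)} (hS : S ⊆ A ∩ G.neighborFinset u) :
    #B ≤ #(commonNeighborsIn G (insert u S) B) + (#S + 1) * m := by
  have hsub : insert u S ⊆ A := insert_subset hu (hS.trans inter_subset_left)
  grw [card_le_card_commonNeighborsIn_add fun s hs ↦ hAB.card_sdiff_le_left s (hsub hs),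
    card_insert_le u S]

lemma WheelFree.not_isPathFamily (hG : WheelFree (2 * k + 1) G) (hAB : IsAlmostBiclique G A B m)
    (hB : 2 * k + (k + 1) * m ≤ #B) {u : Fin n} (hu : u ∈ A) {S : Finset (Fin n)}
    (hS : S ⊆ A ∩ G.neighborFinset u) (hSk : #S ≤ k) {Q : List (List (Fin n))}
    (hlen : Q.length ≤ #S) (htot : Q.flatten.length + (#S - Q.length) + #S = 2 * k) :
    ¬ IsPathFamily G (commonNeighborsIn G (insert u S) B) Q := by
  intro hQ
  have hcard := hAB.card_le_card_commonNeighborsIn_insert_add hu hS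
  have hSm : (#S + 1) * m ≤ (k + 1) * m := by gcongr
  refine hG (hQ.containsCopy_wheelGraph (u := u) (fun s hs ↦ ?_) (fun c hc ↦ ?_)
    (fun s hs c hc ↦ ?_) hlen htot (by lia))
  · simpa using (mem_inter.1 (hS hs)).2
  · exact (mem_commonNeighborsIn.1 hc).2 u (mem_insert_self ..)
  · exact (mem_commonNeighborsIn.1 hc).2 s (mem_insert_of_mem hs)

lemma WheelFree.card_inter_neighborFinset_lt (hG : WheelFree (2 * k + 1) G)
    (hAB : IsAlmostBiclique G A B m) (hB : 2 * k + (k + 1) * m ≤ #B) {u : Fin n} (hu : u ∈ A) :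
    #(A ∩ G.neighborFinset u) < k := by
  by_contra! hk
  obtain ⟨S, hS, hSk⟩ := exists_subset_card_eq hk
  exact hG.not_isPathFamily hAB hB hu hS hSk.le (Nat.zero_le _) (by simp [hSk]; lia) .nil

/-- `t` disjoint paths on `l` vertices in `B` would complete the neighbours of `u` in `A` to the
rim of a wheel with hub `u`. -/
lemma WheelFree.card_le_of_hasLocalPath (hG : WheelFree (2 * k + 1) G)
    (hAB : IsAlmostBiclique G A B m) (hA : 2 * k + (k + 1) * m ≤ #A)
    (hB : 2 * k + (k + 1) * m ≤ #B) {u : Fin n} (hu : u ∈ A) {l t : ℕ} (hl : 0 < l)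
    (ht : t ≤ #(A ∩ G.neighborFinset u))
    (htot : t * l + (#(A ∩ G.neighborFinset u) - t) + #(A ∩ G.neighborFinset u) = 2 * k)
    {D : Finset (Fin n)} (hDB : D ⊆ B) (hD : ∀ v ∈ D, HasLocalPath G B l v) :
    #D ≤ k ^ 2 * (m + 2) := by
  by_contra! hcard
  have hk := hG.card_inter_neighborFinset_lt hAB hB hu
  set S := A ∩ G.neighborFinset u with hS
  set C := commonNeighborsIn G (insert u S) B
  have hCB : C ⊆ B := fun c hc ↦ (mem_commonNeighborsIn.1 hc).1
  have hBC : #(B \ C) ≤ k * m := by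
    have := hAB.card_le_card_commonNeighborsIn_insert_add hu hS.le
    have : (#S + 1) * m ≤ k * m := by gcongr; lia
    have := card_sdiff_add_card_eq_card hCB
    lia
  have hmany : (t * l + #(B \ C)) * (k - 1 + 1) < #D := by
    refine lt_of_le_of_lt ?_ hcard
    have htl : t * l ≤ 2 * k := by lia
    calc (t * l + #(B \ C)) * (k - 1 + 1) ≤ (2 * k + k * m) * k :=
          Nat.mul_le_mul (add_le_add htl hBC) (by lia)
      _ = k ^ 2 * (m + 2) := by ring
  obtain ⟨Q, hQ, hlen, hQtot⟩ := exists_isPathFamily_of_hasLocalPath hl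
    (fun v hv ↦ Nat.le_sub_one_of_lt (hG.card_inter_neighborFinset_lt hAB.symm hA hv)) hCB hDB hD
    hmany
  exact hG.not_isPathFamily hAB hB hu hS.le hk.le (by lia) (by lia) hQ

lemma WheelFree.card_filter_one_le_of_two_mul_le (hG : WheelFree (2 * k + 1) G)
    (hAB : IsAlmostBiclique G A B m) (hA : 2 * k + (k + 1) * m ≤ #A)
    (hB : 2 * k + (k + 1) * m ≤ #B) {u : Fin n} (hu : u ∈ A)
    (hdeg : 2 * k ≤ 3 * #(A ∩ G.neighborFinset u)) :
    #{v ∈ B | 1 ≤ #(B ∩ G.neighborFinset v)} ≤ k ^ 2 * (m + 2) := by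
  have hk := hG.card_inter_neighborFinset_lt hAB hB hu
  refine hG.card_le_of_hasLocalPath hAB hA hB hu (l := 2)
    (t := 2 * (k - #(A ∩ G.neighborFinset u))) (by lia) (by lia) (by lia) (filter_subset ..)
    fun v hv ↦ ?_
  rw [mem_filter] at hv
  exact hasLocalPath_two hv.1 hv.2

lemma WheelFree.card_filter_two_le_of_le_two_mul (hG : WheelFree (2 * k + 1) G)
    (hAB : IsAlmostBiclique G A B m) (hA : 2 * k + (k + 1) * m ≤ #A)
    (hB : 2 * k + (k + 1) * m ≤ #B) {u : Fin n} (hu : u ∈ A)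
    (hdeg : k ≤ 2 * #(A ∩ G.neighborFinset u)) :
    #{v ∈ B | 2 ≤ #(B ∩ G.neighborFinset v)} ≤ k ^ 2 * (m + 2) := by
  have hk := hG.card_inter_neighborFinset_lt hAB hB hu
  refine hG.card_le_of_hasLocalPath hAB hA hB hu (l := 3) (t := k - #(A ∩ G.neighborFinset u))
    (by lia) (by lia) (by lia) (filter_subset ..) fun v hv ↦ ?_
  rw [mem_filter] at hv
  exact hasLocalPath_three hv.1 hv.2

end InnerDegree

section JoinRadius

/-- The number `(K + √(K² + 4p)) / 2`: the spectral radius of the complete join of a `K`-regular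
graph on `a` vertices with an edgeless graph on `b` vertices, where `p = a b`. -/
noncomputable def joinRadius (K p : ℝ) : ℝ := (K + √(K ^ 2 + 4 * p)) / 2

lemma joinRadius_sq {p : ℝ} (K : ℝ) (hp : 0 ≤ p) :
    joinRadius K p ^ 2 = K * joinRadius K p + p := by
  have := Real.sq_sqrt (add_nonneg (sq_nonneg K) (mul_nonneg zero_le_four hp))
  simp only [joinRadius]
  linarith

lemma le_joinRadius {K p : ℝ} (hp : 0 ≤ p) : K ≤ joinRadius K p := by
  have : K ≤ √(K ^ 2 + 4 * p) := Real.le_sqrt_of_sq_le (le_add_of_nonneg_right (by positivity))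
  simp only [joinRadius]
  linarith

lemma joinRadius_le_joinRadius {K p q : ℝ} (h : p ≤ q) : joinRadius K p ≤ joinRadius K q := by
  simp only [joinRadius]
  gcongr

lemma add_div_two_le_joinRadius (K n : ℝ) : (K + n) / 2 ≤ joinRadius K (n ^ 2 / 4) := by
  have : n ≤ √(K ^ 2 + 4 * (n ^ 2 / 4)) :=
    Real.le_sqrt_of_sq_le (by linarith [sq_nonneg K])
  simp only [joinRadius]
  linarith

lemma joinRadius_sub_one_le {K p : ℝ} (h : 4 ≤ K ^ 2 + 4 * p) :
    joinRadius K (p - 1) ≤ joinRadius K p - 1 / √(K ^ 2 + 4 * p) := by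
  set q := K ^ 2 + 4 * p
  have hpos : 0 < √q := Real.sqrt_pos.2 (by linarith)
  have hsqrt : √(q - 4) ≤ √q - 2 / √q := by
    have hdiv : √q - 2 / √q = (q - 2) / √q := by rw [sub_div, Real.div_sqrt]
    rw [hdiv, le_div_iff₀ hpos]
    have := two_mul_le_add_sq √(q - 4) √q
    rw [Real.sq_sqrt (by linarith), Real.sq_sqrt (by linarith)] at this
    linarith
  have hq : K ^ 2 + 4 * (p - 1) = q - 4 := by ring
  rw [← mul_one_div 2] at hsqrt
  simp only [joinRadius, hq]
  linarith

lemma one_sub_le_div_sqrt {K n γ : ℝ} (hK : 0 ≤ K) (hn : 0 < n) (hγ : γ ≤ 1)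
    (hKn : K ≤ γ * n) : 1 - γ ≤ n / √(K ^ 2 + n ^ 2) := by
  rw [le_div_iff₀ (by positivity)]
  have hsqrt : √(K ^ 2 + n ^ 2) ≤ n + K := Real.sqrt_le_iff.2 ⟨by positivity, by nlinarith⟩
  calc (1 - γ) * √(K ^ 2 + n ^ 2) ≤ (1 - γ) * (n + K) := by gcongr
    _ ≤ n := by nlinarith

lemma joinRadius_le_joinRadius_sub_one_add {K p N : ℝ} (hN : 0 < N)
    (h : N ^ 2 ≤ K ^ 2 + 4 * (p - 1)) : joinRadius K p ≤ joinRadius K (p - 1) + 1 / N := by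
  simp only [joinRadius]
  set r := √(K ^ 2 + 4 * (p - 1))
  have hNr : N ≤ r := Real.le_sqrt_of_sq_le h
  have hr : r ^ 2 = K ^ 2 + 4 * (p - 1) := Real.sq_sqrt ((sq_nonneg N).trans h)
  have hmul : N * (1 / N) = 1 := mul_one_div_cancel hN.ne'
  have hsqrt : √(K ^ 2 + 4 * p) ≤ r + 2 * (1 / N) := by
    have : 1 ≤ r * (1 / N) := hmul.ge.trans (by gcongr)
    exact Real.sqrt_le_iff.2 ⟨by positivity, by nlinarith [sq_nonneg (1 / N)]⟩
  linarith

lemma joinRadius_sq_div_four_le {K N : ℝ} (hK : 0 ≤ K) (hN : 0 ≤ N) :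
    joinRadius K (N ^ 2 / 4) ≤ K + N / 2 := by
  have : √(K ^ 2 + 4 * (N ^ 2 / 4)) ≤ K + N :=
    Real.sqrt_le_iff.2 ⟨by positivity, by nlinarith [mul_nonneg hK hN]⟩
  simp only [joinRadius]
  linarith

lemma joinRadius_sq_div_four (K N : ℝ) : joinRadius K (N ^ 2 / 4) = (K + √(K ^ 2 + N ^ 2)) / 2 := by
  rw [joinRadius, mul_div_cancel₀ _ four_ne_zero]

end JoinRadius

section FormOfPartition

variable {V : Type*} [Fintype V] [DecidableEq V] {G : SimpleGraph V} [DecidableRel G.Adj]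
  {x : V → ℝ}

lemma sum_sq_add_sum_sq_compl (x : V → ℝ) (A : Finset V) :
    ∑ v ∈ A, x v ^ 2 + ∑ v ∈ Aᶜ, x v ^ 2 = x ⬝ᵥ x := by
  simp only [sum_add_sum_compl, dotProduct, sq]

lemma sum_mul_sum_neighborFinset_le (hx : ∀ v, 0 ≤ x v) (A : Finset V) :
    ∑ v ∈ A, x v * ∑ w ∈ G.neighborFinset v, x w ≤
      (∑ v ∈ A, x v) * ∑ v ∈ Aᶜ, x v +
        ∑ v ∈ A, x v * ∑ w ∈ A ∩ G.neighborFinset v, x w := by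
  rw [sum_mul, ← sum_add_distrib]
  refine sum_le_sum fun v _ ↦ ?_
  rw [← mul_add]
  refine mul_le_mul_of_nonneg_left ?_ (hx v)
  rw [← sum_inter_add_sum_sdiff (G.neighborFinset v) A, inter_comm, add_comm]
  gcongr
  · exact fun i _ _ ↦ hx i
  · exact fun w hw ↦ mem_compl.2 (mem_sdiff.1 hw).2

lemma adjMatrix_form_le_add_inner (hx : ∀ v, 0 ≤ x v) (A : Finset V) :
    x ⬝ᵥ G.adjMatrix ℝ *ᵥ x ≤ 2 * ((∑ v ∈ A, x v) * ∑ v ∈ Aᶜ, x v) +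
      ∑ v ∈ A, x v * ∑ w ∈ A ∩ G.neighborFinset v, x w +
      ∑ v ∈ Aᶜ, x v * ∑ w ∈ Aᶜ ∩ G.neighborFinset v, x w := by
  have hA := sum_mul_sum_neighborFinset_le (G := G) hx A
  have hAc := sum_mul_sum_neighborFinset_le (G := G) hx Aᶜ
  rw [compl_compl] at hAc
  rw [adjMatrix_form_eq_sum, ← sum_add_sum_compl A]
  linarith

lemma sum_mul_sum_inter_neighborFinset_le_sum_sq (x : V → ℝ) (A : Finset V) :
    ∑ v ∈ A, x v * ∑ w ∈ A ∩ G.neighborFinset v, x w ≤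
      ∑ v ∈ A, #(A ∩ G.neighborFinset v) * x v ^ 2 := by
  have hswap : ∑ v ∈ A, ∑ w ∈ A ∩ G.neighborFinset v, x w ^ 2 =
      ∑ v ∈ A, #(A ∩ G.neighborFinset v) * x v ^ 2 := by
    rw [sum_comm' (t' := A) (s' := fun w ↦ A ∩ G.neighborFinset w)
      (by grind [G.adj_comm, SimpleGraph.mem_neighborFinset])]
    simp
  calc ∑ v ∈ A, x v * ∑ w ∈ A ∩ G.neighborFinset v, x w
      ≤ ∑ v ∈ A, ∑ w ∈ A ∩ G.neighborFinset v, (x v ^ 2 / 2 + x w ^ 2 / 2) := by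
        simp only [mul_sum]
        refine sum_le_sum fun v _ ↦ sum_le_sum fun w _ ↦ ?_
        linarith [two_mul_le_add_sq (x v) (x w)]
    _ = ∑ v ∈ A, #(A ∩ G.neighborFinset v) * x v ^ 2 := by
        simp only [sum_add_distrib, ← sum_div, hswap, sum_const, nsmul_eq_mul]
        ring

lemma two_mul_mul_le_of_sq_le {P Q X Y a b t s : ℝ} (hX : 0 ≤ X) (hY : 0 ≤ Y)
    (hP : P ^ 2 ≤ a * X) (hQ : Q ^ 2 ≤ b * Y) (ht : 0 ≤ t) (hs : 0 ≤ s) (hts : t * s = a * b) :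
    2 * (P * Q) ≤ t * X + s * Y := by
  refine le_of_sq_le_sq ?_ (by positivity)
  calc (2 * (P * Q)) ^ 2 = 4 * (P ^ 2 * Q ^ 2) := by ring
    _ ≤ 4 * (a * X * (b * Y)) := by gcongr; exact (sq_nonneg _).trans hP
    _ = 4 * (t * X * (s * Y)) := by linear_combination -4 * X * Y * hts
    _ ≤ (t * X + s * Y) ^ 2 := by linarith [four_mul_le_sq_add (t * X) (s * Y)]

lemma adjMatrix_form_le_of_inner_le (hx : ∀ v, 0 ≤ x v) {A : Finset V} {K c d : ℝ} (hK : 0 ≤ K)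
    (hA : ∑ v ∈ A, x v * ∑ w ∈ A ∩ G.neighborFinset v, x w ≤ K * ∑ v ∈ A, x v ^ 2 + c)
    (hAc : ∑ v ∈ Aᶜ, x v * ∑ w ∈ Aᶜ ∩ G.neighborFinset v, x w ≤ d) :
    x ⬝ᵥ G.adjMatrix ℝ *ᵥ x ≤ joinRadius K (#A * #Aᶜ) * (x ⬝ᵥ x) + c + d := by
  have hp : (0 : ℝ) ≤ #A * #Aᶜ := by positivity
  set ρ := joinRadius K (#A * #Aᶜ)
  have hρ : ρ ^ 2 = K * ρ + #A * #Aᶜ := joinRadius_sq K hp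
  have hKρ : K ≤ ρ := le_joinRadius hp
  have hcross : 2 * ((∑ v ∈ A, x v) * ∑ v ∈ Aᶜ, x v) ≤
      (ρ - K) * ∑ v ∈ A, x v ^ 2 + ρ * ∑ v ∈ Aᶜ, x v ^ 2 :=
    two_mul_mul_le_of_sq_le (sum_nonneg fun v _ ↦ sq_nonneg (x v))
      (sum_nonneg fun v _ ↦ sq_nonneg (x v)) sq_sum_le_card_mul_sum_sq sq_sum_le_card_mul_sum_sq
      (sub_nonneg.2 hKρ) (hK.trans hKρ) (by linarith)
  rw [← sum_sq_add_sum_sq_compl x A]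
  linarith [adjMatrix_form_le_add_inner (G := G) hx A]

lemma IsPerronVector.sum_mul_sum_inter_le {μ : ℝ} (hx : IsPerronVector G μ x) (A : Finset V) :
    ∑ v ∈ A, x v * ∑ w ∈ A ∩ G.neighborFinset v, x w ≤
      (∑ v ∈ A, #(A ∩ G.neighborFinset v) : ℕ) := by
  rw [Nat.cast_sum]
  refine (sum_mul_sum_inter_neighborFinset_le_sum_sq x A).trans (sum_le_sum fun v _ ↦ ?_)
  exact mul_le_of_le_one_right (Nat.cast_nonneg _) (pow_le_one₀ (hx.nonneg v) (hx.le_one v))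

lemma IsPerronVector.mul_dotProduct_le_sum_card_inter {μ K : ℝ} (hx : IsPerronVector G μ x)
    (hμ : Fintype.card V / 2 + K ≤ μ) (A : Finset V) :
    K * (x ⬝ᵥ x) ≤ (∑ v ∈ A, #(A ∩ G.neighborFinset v) : ℕ) +
      (∑ v ∈ Aᶜ, #(Aᶜ ∩ G.neighborFinset v) : ℕ) := by
  have hform := adjMatrix_form_le_add_inner (G := G) hx.nonneg A
  have hsum : (∑ v, x v) ^ 2 ≤ Fintype.card V * (x ⬝ᵥ x) := by
    simpa [dotProduct, sq] using sq_sum_le_card_mul_sum_sq (s := univ) (f := x)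
  rw [← sum_add_sum_compl A] at hsum
  rw [hx.form_eq] at hform
  have hμx := mul_le_mul_of_nonneg_right hμ (dotProduct_self_star_nonneg x)
  simp only [star_trivial] at hμx
  linarith [hx.sum_mul_sum_inter_le A, hx.sum_mul_sum_inter_le Aᶜ,
    four_mul_le_sq_add (∑ v ∈ A, x v) (∑ v ∈ Aᶜ, x v)]

end FormOfPartition

section InnerEdges

variable {V : Type*} [Fintype V] [DecidableEq V] (G : SimpleGraph V) [DecidableRel G.Adj]

lemma sum_card_inter_neighborFinset_eq_two_mul (A : Finset V) :
    ∑ v ∈ A, #(A ∩ G.neighborFinset v) = 2 * #(G.induce (A : Set V)).edgeFinset := by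
  have hA : univ.map (Function.Embedding.subtype (· ∈ (A : Set V))) = A := by ext; simp
  rw [← SimpleGraph.sum_degrees_eq_twice_card_edges, ← sum_coe_sort]
  refine sum_congr rfl fun v _ ↦ ?_
  have hdeg := degree_comap (G := G) (Function.Embedding.subtype (· ∈ (A : Set V))) v
  rw [hA] at hdeg
  exact hdeg.symm

lemma sum_card_inter_neighborFinset_le_two {A : Finset V}
    (h : ∀ a ∈ A, ∀ b ∈ A, ∀ c ∈ A, ∀ d ∈ A, G.Adj a b → G.Adj c d → s(a, b) = s(c, d)) :
    ∑ v ∈ A, #(A ∩ G.neighborFinset v) ≤ 2 := by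
  rw [sum_card_inter_neighborFinset_eq_two_mul]
  suffices #(G.induce (A : Set V)).edgeFinset ≤ 1 by lia
  refine card_le_one.2 fun e he f hf ↦ ?_
  induction e with | h a b
  induction f with | h c d
  rw [SimpleGraph.mem_edgeFinset, SimpleGraph.mem_edgeSet, SimpleGraph.induce_adj] at he hf
  have := h a a.2 b b.2 c c.2 d d.2 he hf
  simpa only [Sym2.eq_iff, Subtype.ext_iff] using this

lemma exists_card_inter_neighborFinset_lt {A : Finset V} {d : ℕ} (hA : Odd #A) (hd : Odd d)
    (h : ∀ v ∈ A, #(A ∩ G.neighborFinset v) ≤ d) : ∃ v ∈ A, #(A ∩ G.neighborFinset v) < d := by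
  by_contra! hge
  have hsum : ∑ v ∈ A, #(A ∩ G.neighborFinset v) = #A * d :=
    sum_const_nat fun v hv ↦ (h v hv).antisymm (hge v hv)
  rw [sum_card_inter_neighborFinset_eq_two_mul] at hsum
  exact Nat.not_even_iff_odd.2 (hA.mul hd) (hsum ▸ even_two_mul _)

end InnerEdges

lemma sum_le_mul_card_add_mul_card_filter {ι : Type*} {s : Finset ι} {f : ι → ℕ} {j d c : ℕ}
    (hd : ∀ i ∈ s, f i ≤ d) (hc : #{i ∈ s | j + 1 ≤ f i} ≤ c) :
    ∑ i ∈ s, f i ≤ j * #s + d * c := by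
  calc ∑ i ∈ s, f i ≤ ∑ i ∈ s, (j + if j + 1 ≤ f i then d else 0) :=
        sum_le_sum fun i hi ↦ by have := hd i hi; split_ifs <;> lia
    _ = j * #s + d * #{i ∈ s | j + 1 ≤ f i} := by
        rw [sum_add_distrib, ← sum_filter, sum_const, sum_const, smul_eq_mul, smul_eq_mul]
        ring
    _ ≤ j * #s + d * c := by gcongr

section InnerDegreeSum

variable {n k m : ℕ} {G : SimpleGraph (Fin n)} [DecidableRel G.Adj] {A B : Finset (Fin n)}

lemma WheelFree.sum_card_inter_le_of_two_mul_le (hG : WheelFree (2 * k + 1) G)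
    (hAB : IsAlmostBiclique G A B m) (hA : 2 * k + (k + 1) * m ≤ #A)
    (hB : 2 * k + (k + 1) * m ≤ #B) {u : Fin n} (hu : u ∈ A)
    (hdeg : 2 * k ≤ 3 * #(A ∩ G.neighborFinset u)) :
    ∑ v ∈ B, #(B ∩ G.neighborFinset v) ≤ k ^ 3 * (m + 2) := by
  have := sum_le_mul_card_add_mul_card_filter
    (fun v hv ↦ (hG.card_inter_neighborFinset_lt hAB.symm hA hv).le)
    (hG.card_filter_one_le_of_two_mul_le hAB hA hB hu hdeg)
  linarith

lemma WheelFree.sum_card_inter_le_of_le_two_mul (hG : WheelFree (2 * k + 1) G)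
    (hAB : IsAlmostBiclique G A B m) (hA : 2 * k + (k + 1) * m ≤ #A)
    (hB : 2 * k + (k + 1) * m ≤ #B) {u : Fin n} (hu : u ∈ A)
    (hdeg : k ≤ 2 * #(A ∩ G.neighborFinset u)) :
    ∑ v ∈ B, #(B ∩ G.neighborFinset v) ≤ #B + k ^ 3 * (m + 2) := by
  have := sum_le_mul_card_add_mul_card_filter
    (fun v hv ↦ (hG.card_inter_neighborFinset_lt hAB.symm hA hv).le)
    (hG.card_filter_two_le_of_le_two_mul hAB hA hB hu hdeg)
  linarith

lemma WheelFree.exists_sum_card_inter_le_of_le_two_mul (hk : 6 ≤ k)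
    (hG : WheelFree (2 * k + 1) G) (hAB : IsAlmostBiclique G A B m)
    (hA : 2 * k + (k + 1) * m ≤ #A) (hB : 2 * k + (k + 1) * m ≤ #B)
    (hdegA : ∀ v ∈ A, #(A ∩ G.neighborFinset v) ≤ k - 2) {u : Fin n} (hu : u ∈ A)
    (hdeg : k ≤ 2 * #(A ∩ G.neighborFinset u)) :
    ∃ c d, 3 * (c + d) + 4 ≤ 3 * k ∧ ∑ v ∈ A, #(A ∩ G.neighborFinset v) ≤ c * #A ∧
      ∑ v ∈ B, #(B ∩ G.neighborFinset v) ≤ d * #B + k ^ 3 * (m + 2) := by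
  by_cases hbig : ∃ v ∈ A, 2 * k ≤ 3 * #(A ∩ G.neighborFinset v)
  · obtain ⟨v, hv, hdegv⟩ := hbig
    refine ⟨k - 2, 0, by lia, ?_, by
      simpa using hG.sum_card_inter_le_of_two_mul_le hAB hA hB hv hdegv⟩
    simpa [mul_comm] using sum_le_card_nsmul A _ _ hdegA
  · push Not at hbig
    refine ⟨(2 * k - 1) / 3, 1, by lia, ?_, by
      simpa using hG.sum_card_inter_le_of_le_two_mul hAB hA hB hu hdeg⟩
    have := sum_le_card_nsmul A _ ((2 * k - 1) / 3) fun v hv ↦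
      (by have := hbig v hv; lia : #(A ∩ G.neighborFinset v) ≤ _)
    simpa [mul_comm] using this

/-- The parity of `k` enters in the last case: if all inner degrees are below `k / 2`, then they
are at most `k / 2 - 1`. -/
lemma WheelFree.exists_sum_card_inter_le (hk : 6 ≤ k) (hke : Even k)
    (hG : WheelFree (2 * k + 1) G) (hAB : IsAlmostBiclique G A B m)
    (hA : 2 * k + (k + 1) * m ≤ #A) (hB : 2 * k + (k + 1) * m ≤ #B)
    (hdegA : ∀ v ∈ A, #(A ∩ G.neighborFinset v) ≤ k - 2)
    (hdegB : ∀ v ∈ B, #(B ∩ G.neighborFinset v) ≤ k - 2) :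
    ∃ c d, 3 * (c + d) + 4 ≤ 3 * k ∧
      ∑ v ∈ A, #(A ∩ G.neighborFinset v) ≤ c * #A + k ^ 3 * (m + 2) ∧
      ∑ v ∈ B, #(B ∩ G.neighborFinset v) ≤ d * #B + k ^ 3 * (m + 2) := by
  by_cases hbigA : ∃ v ∈ A, k ≤ 2 * #(A ∩ G.neighborFinset v)
  · obtain ⟨v, hv, hdeg⟩ := hbigA
    obtain ⟨c, d, hcd, hc, hd⟩ :=
      hG.exists_sum_card_inter_le_of_le_two_mul hk hAB hA hB hdegA hv hdeg
    exact ⟨c, d, hcd, le_add_right hc, hd⟩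
  by_cases hbigB : ∃ v ∈ B, k ≤ 2 * #(B ∩ G.neighborFinset v)
  · obtain ⟨v, hv, hdeg⟩ := hbigB
    obtain ⟨d, c, hdc, hd, hc⟩ :=
      hG.exists_sum_card_inter_le_of_le_two_mul hk hAB.symm hB hA hdegB hv hdeg
    exact ⟨c, d, by lia, hc, le_add_right hd⟩
  push Not at hbigA hbigB
  obtain ⟨j, rfl⟩ := hke
  have hsmall {C : Finset (Fin n)} (hC : ∀ v ∈ C, 2 * #(C ∩ G.neighborFinset v) < j + j) :
      ∑ v ∈ C, #(C ∩ G.neighborFinset v) ≤ (j - 1) * #C := by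
    rw [mul_comm, ← smul_eq_mul]
    exact sum_le_card_nsmul C _ _ fun v hv ↦ by have := hC v hv; lia
  exact ⟨j - 1, j - 1, by lia, le_add_right (hsmall hbigA), le_add_right (hsmall hbigB)⟩

lemma WheelFree.exists_card_inter_neighborFinset_eq (hk : 6 ≤ k) (hke : Even k)
    (hG : WheelFree (2 * k + 1) G) (hAB : IsAlmostBiclique G A B m)
    (hA : 2 * k + (k + 1) * m ≤ #A) (hB : 2 * k + (k + 1) * m ≤ #B) {δ : ℝ} (hn : 0 < n)
    (hδ : 0 ≤ δ) (hkδ : k * δ ≤ 1 / 100) (hAn : #A ≤ (1 / 2 + δ) * n) (hBn : #B ≤ (1 / 2 + δ) * n)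
    (hm : k ^ 3 * (m + 2) ≤ δ * n)
    (hsum : ((k - 1) / 2 - δ) * n ≤ (∑ v ∈ A, #(A ∩ G.neighborFinset v) : ℕ) +
      (∑ v ∈ B, #(B ∩ G.neighborFinset v) : ℕ)) :
    (∃ u ∈ A, #(A ∩ G.neighborFinset u) = k - 1) ∨
      ∃ u ∈ B, #(B ∩ G.neighborFinset u) = k - 1 := by
  by_contra! hne
  obtain ⟨c, d, hcd, hc, hd⟩ := hG.exists_sum_card_inter_le hk hke hAB hA hB
    (fun v hv ↦ by
      have := hG.card_inter_neighborFinset_lt hAB hB hv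
      have := hne.1 v hv
      lia)
    (fun v hv ↦ by
      have := hG.card_inter_neighborFinset_lt hAB.symm hA hv
      have := hne.2 v hv
      lia)
  rify at hcd hc hd hk hn
  have hcA : (c : ℝ) * #A ≤ c * ((1 / 2 + δ) * n) := by gcongr
  have hdB : (d : ℝ) * #B ≤ d * ((1 / 2 + δ) * n) := by gcongr
  have hcdn : ((c : ℝ) + d) * ((1 / 2 + δ) * n) ≤ (k - 4 / 3) * ((1 / 2 + δ) * n) := by
    gcongr
    linarith
  have hδn : (k + 2) * δ * n < 1 / 6 * n := by
    gcongr
    nlinarith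
  push_cast at hsum
  nlinarith

/-- A vertex of `A` of inner degree `k - 1` leaves `B` almost without edges, so that the average
inner degree of `A` has to be almost `k - 1`. -/
lemma WheelFree.le_mul_card_filter (hk : 6 ≤ k) (hG : WheelFree (2 * k + 1) G)
    (hAB : IsAlmostBiclique G A B m) (hA : 2 * k + (k + 1) * m ≤ #A)
    (hB : 2 * k + (k + 1) * m ≤ #B) {δ : ℝ} (hδ : 0 ≤ δ) (hkδ : k * δ ≤ 1 / 100)
    (hAn : #A ≤ (1 / 2 + δ) * n) (hm : k ^ 3 * (m + 2) ≤ δ * n)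
    (hsum : ((k - 1) / 2 - δ) * n ≤ (∑ v ∈ A, #(A ∩ G.neighborFinset v) : ℕ) +
      (∑ v ∈ B, #(B ∩ G.neighborFinset v) : ℕ))
    {u : Fin n} (hu : u ∈ A) (huk : #(A ∩ G.neighborFinset u) = k - 1) :
    (n : ℝ) / 4 ≤ k * #{v ∈ A | k - 1 ≤ #(A ∩ G.neighborFinset v)} := by
  have hsumB := hG.sum_card_inter_le_of_two_mul_le hAB hA hB hu (by lia)
  obtain ⟨j, rfl⟩ := Nat.exists_eq_add_of_le' (show 2 ≤ k by lia)
  set F := #{v ∈ A | j + 2 - 1 ≤ #(A ∩ G.neighborFinset v)}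
  have hsumA : ∑ v ∈ A, #(A ∩ G.neighborFinset v) ≤ j * #A + (j + 2) * F :=
    sum_le_mul_card_add_mul_card_filter
      (fun v hv ↦ (hG.card_inter_neighborFinset_lt hAB hB hv).le) le_rfl
  rify at hsumA hsumB hk
  push_cast at hsum hm hkδ ⊢
  have hjA : (j : ℝ) * #A ≤ j * ((1 / 2 + δ) * n) := by gcongr
  have hδn : (j + 2) * δ * n ≤ 1 / 100 * n := by gcongr
  linarith [mul_nonneg hδ (Nat.cast_nonneg (α := ℝ) n)]

end InnerDegreeSum

section SingleEdge

variable {n k m : ℕ} {G : SimpleGraph (Fin n)} [DecidableRel G.Adj] {A B : Finset (Fin n)}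

lemma WheelFree.exists_subset_commonNeighborsIn (hG : WheelFree (2 * k + 1) G)
    (hAB : IsAlmostBiclique G A B m) (hB : 2 * k + (k + 1) * m ≤ #B)
    (hfull : 4 * m * k < #{v ∈ A | k - 1 ≤ #(A ∩ G.neighborFinset v)})
    {T : Finset (Fin n)} (hT : T ⊆ B) (hT4 : #T ≤ 4) :
    ∃ u ∈ A, #(A ∩ G.neighborFinset u) = k - 1 ∧
      T ⊆ commonNeighborsIn G (insert u (A ∩ G.neighborFinset u)) B := by
  set D := A \ commonNeighborsIn G T A
  have hD : #D ≤ 4 * m := by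
    have := card_le_card_commonNeighborsIn_add (D := A)
      fun t ht ↦ hAB.card_sdiff_le_right t (hT ht)
    have := card_sdiff_add_card_eq_card
      (show commonNeighborsIn G T A ⊆ A from fun v hv ↦ (mem_commonNeighborsIn.1 hv).1)
    have : #T * m ≤ 4 * m := by gcongr
    lia
  have hk : 1 ≤ k := by
    obtain ⟨v, hv⟩ := card_pos.1 ((Nat.zero_le _).trans_lt hfull)
    exact Nat.zero_lt_of_lt (hG.card_inter_neighborFinset_lt hAB hB (mem_filter.1 hv).1)
  have hbad : #(D ∪ D.biUnion fun v ↦ A ∩ G.neighborFinset v) ≤ 4 * m * k := by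
    have := card_biUnion_le_card_mul D (fun v ↦ A ∩ G.neighborFinset v) (k - 1) fun v hv ↦
      Nat.le_sub_one_of_lt (hG.card_inter_neighborFinset_lt hAB hB (sdiff_subset hv))
    grw [card_union_le, this, ← hD, ← mul_one_add, Nat.add_sub_of_le hk]
  obtain ⟨u, hu, hu_good⟩ := exists_mem_notMem_of_card_lt_card (hbad.trans_lt hfull)
  rw [mem_filter] at hu
  have hgood : ∀ v ∈ insert u (A ∩ G.neighborFinset u), v ∈ A ∧ v ∉ D := by
    simp only [D, mem_union, mem_biUnion, not_or, not_exists, not_and] at hu_good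
    grind [SimpleGraph.mem_neighborFinset, SimpleGraph.adj_comm]
  refine ⟨u, hu.1, le_antisymm (Nat.le_sub_one_of_lt
    (hG.card_inter_neighborFinset_lt hAB hB hu.1)) hu.2, fun t ht ↦ ?_⟩
  refine mem_commonNeighborsIn.2 ⟨hT ht, fun v hv ↦ ?_⟩
  obtain ⟨hvA, hvD⟩ := hgood v hv
  by_contra hadj
  refine hvD (mem_sdiff.2 ⟨hvA, fun hv ↦ hadj ?_⟩)
  exact ((mem_commonNeighborsIn.1 hv).2 t ht).symm

/-- Together with the `k - 1` neighbours in `A` of a vertex of full inner degree, such a family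
makes up a rim of length `2k`. -/
lemma WheelFree.not_isPathFamily_of_length_eq (hG : WheelFree (2 * k + 1) G)
    (hAB : IsAlmostBiclique G A B m) (hB : 2 * k + (k + 1) * m ≤ #B)
    (hfull : 4 * m * k < #{v ∈ A | k - 1 ≤ #(A ∩ G.neighborFinset v)})
    {Q : List (List (Fin n))} (hQk : Q.length < k) (hQ4 : Q.flatten.length ≤ 4)
    (hQ2 : Q.flatten.length = Q.length + 2) : ¬ IsPathFamily G B Q := by
  intro hQ
  obtain ⟨u, hu, huk, hT⟩ := hG.exists_subset_commonNeighborsIn hAB hB hfull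
    (T := Q.flatten.toFinset) (fun v hv ↦ hQ.mem v (List.mem_toFinset.1 hv))
    ((List.toFinset_card_le _).trans hQ4)
  exact hG.not_isPathFamily hAB hB hu subset_rfl (by lia) (by lia) (by lia)
    { hQ with mem := fun v hv ↦ hT (List.mem_toFinset.2 hv) }

lemma WheelFree.sym2_eq_of_adj (hk : 3 ≤ k) (hG : WheelFree (2 * k + 1) G)
    (hAB : IsAlmostBiclique G A B m) (hB : 2 * k + (k + 1) * m ≤ #B)
    (hfull : 4 * m * k < #{v ∈ A | k - 1 ≤ #(A ∩ G.neighborFinset v)})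
    {a b c d : Fin n} (ha : a ∈ B) (hb : b ∈ B) (hc : c ∈ B) (hd : d ∈ B) (hab : G.Adj a b)
    (hcd : G.Adj c d) : s(a, b) = s(c, d) := by
  have hpath {a b c : Fin n} (ha : a ∈ B) (hb : b ∈ B) (hc : c ∈ B) (hab : G.Adj a b)
      (hbc : G.Adj b c) : a = c := by
    by_contra hac
    refine hG.not_isPathFamily_of_length_eq hAB hB hfull (Q := [[a, b, c]])
      (by simp; lia) (by simp) (by simp) ?_
    exact IsPathFamily.nil.cons (by simp) (by simp [hab.ne, hbc.ne, hac]) (by simp [hab, hbc])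
      (by simp [ha, hb, hc]) (by simp)
  by_contra hne
  have hdisj : c ≠ a ∧ c ≠ b ∧ d ≠ a ∧ d ≠ b := by
    rw [Sym2.eq_iff] at hne
    refine ⟨?_, ?_, ?_, ?_⟩
    · rintro rfl; exact hne (.inl ⟨rfl, hpath hb ha hd hab.symm hcd⟩)
    · rintro rfl; exact hne (.inr ⟨hpath ha hb hd hab hcd, rfl⟩)
    · rintro rfl; exact hne (.inr ⟨rfl, hpath hb ha hc hab.symm hcd.symm⟩)
    · rintro rfl; exact hne (.inl ⟨hpath ha hb hc hab hcd.symm, rfl⟩)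
  refine hG.not_isPathFamily_of_length_eq hAB hB hfull (Q := [[a, b], [c, d]])
    (by simp; lia) (by simp) (by simp) ?_
  exact (IsPathFamily.nil.cons (by simp) (by simp [hcd.ne]) (by simp [hcd]) (by simp [hc, hd])
    (by simp)).cons (by simp) (by simp [hab.ne]) (by simp [hab]) (by simp [ha, hb])
    (by simp [hdisj])

end SingleEdge

section SmallSide

variable {n k m : ℕ} {G : SimpleGraph (Fin n)} [DecidableRel G.Adj] {A B : Finset (Fin n)}

lemma WheelFree.sum_card_inter_le_two (hk : 6 ≤ k) (hG : WheelFree (2 * k + 1) G)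
    (hAB : IsAlmostBiclique G A B m) (hA : 2 * k + (k + 1) * m ≤ #A)
    (hB : 2 * k + (k + 1) * m ≤ #B) {δ : ℝ} (hn : 0 < n) (hδ : 0 ≤ δ) (hkδ : k * δ ≤ 1 / 100)
    (hAn : #A ≤ (1 / 2 + δ) * n) (hm : k ^ 3 * (m + 2) ≤ δ * n)
    (hsum : ((k - 1) / 2 - δ) * n ≤ (∑ v ∈ A, #(A ∩ G.neighborFinset v) : ℕ) +
      (∑ v ∈ B, #(B ∩ G.neighborFinset v) : ℕ))
    {u : Fin n} (hu : u ∈ A) (huk : #(A ∩ G.neighborFinset u) = k - 1) :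
    ∑ v ∈ B, #(B ∩ G.neighborFinset v) ≤ 2 := by
  have hmany := hG.le_mul_card_filter hk hAB hA hB hδ hkδ hAn hm hsum hu huk
  set F := {v ∈ A | k - 1 ≤ #(A ∩ G.neighborFinset v)}
  have hfull : 4 * m * k < #F := by
    by_contra! hle
    rify at hle hk hn
    have hδ6 : δ ≤ 1 / 600 := by nlinarith
    have : 4 * m * k * (k : ℝ) < n / 4 := by
      calc 4 * m * k * (k : ℝ) ≤ k ^ 3 * (m + 2) := by
            have : (4 : ℝ) * k ^ 2 * m ≤ k * k ^ 2 * m := by gcongr; linarith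
            nlinarith [pow_nonneg (Nat.cast_nonneg (α := ℝ) k) 3]
        _ ≤ δ * n := hm
        _ ≤ 1 / 600 * n := by gcongr
        _ < n / 4 := by linarith
    nlinarith
  exact sum_card_inter_neighborFinset_le_two G fun a ha b hb c hc d hd ↦
    hG.sym2_eq_of_adj (by lia) hAB hB hfull ha hb hc hd

lemma IsAlmostBiclique.exists_sum_card_inter_compl_le_two (hk : 6 ≤ k) (hke : Even k)
    (hG : WheelFree (2 * k + 1) G) (hL : IsAlmostBiclique G A Aᶜ m)
    (hA : 2 * k + (k + 1) * m ≤ #A) (hAc : 2 * k + (k + 1) * m ≤ #Aᶜ) {δ : ℝ} (hn : 0 < n)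
    (hδ : 0 ≤ δ) (hkδ : k * δ ≤ 1 / 100) (hAn : #A ≤ (1 / 2 + δ) * n)
    (hAcn : #Aᶜ ≤ (1 / 2 + δ) * n) (hm : k ^ 3 * (m + 2) ≤ δ * n)
    (hsum : ((k - 1) / 2 - δ) * n ≤ (∑ v ∈ A, #(A ∩ G.neighborFinset v) : ℕ) +
      (∑ v ∈ Aᶜ, #(Aᶜ ∩ G.neighborFinset v) : ℕ)) :
    ∃ B : Finset (Fin n), (∀ v ∈ B, #(B ∩ G.neighborFinset v) ≤ k - 1) ∧
      ∑ v ∈ Bᶜ, #(Bᶜ ∩ G.neighborFinset v) ≤ 2 := by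
  obtain ⟨u, hu, huk⟩ | ⟨u, hu, huk⟩ := hG.exists_card_inter_neighborFinset_eq hk hke hL hA hAc
    hn hδ hkδ hAn hAcn hm hsum
  · refine ⟨A, fun v hv ↦ Nat.le_sub_one_of_lt (hG.card_inter_neighborFinset_lt hL hAc hv), ?_⟩
    exact hG.sum_card_inter_le_two hk hL hA hAc hn hδ hkδ hAn hm hsum hu huk
  · refine ⟨Aᶜ, fun v hv ↦ Nat.le_sub_one_of_lt (hG.card_inter_neighborFinset_lt hL.symm hA hv),
      ?_⟩
    rw [compl_compl]
    exact hG.sum_card_inter_le_two hk hL.symm hAc hA hn hδ hkδ hAcn hm (by linarith) hu huk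

end SmallSide

lemma le_dotProduct_self_of_le {V : Type*} [Fintype V] {x : V → ℝ} {c : ℝ} (hc : 0 ≤ c)
    (hx : ∀ v, c ≤ x v) : c ^ 2 * Fintype.card V ≤ x ⬝ᵥ x := by
  rw [mul_comm, ← nsmul_eq_mul, dotProduct]
  exact card_nsmul_le_sum univ _ _ fun v _ ↦ by nlinarith [hx v]

lemma IsPerronVector.mul_card_le_sum_card_inter_add {V : Type*} [Fintype V] [DecidableEq V]
    {G : SimpleGraph V} [DecidableRel G.Adj] {μ K γ : ℝ} {x : V → ℝ} (hx : IsPerronVector G μ x)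
    (hK : 0 ≤ K) (hγ : γ ≤ 1) (hxγ : ∀ v, 1 - γ ≤ x v) (hμ : (Fintype.card V + K) / 2 ≤ μ)
    (L : Finset V) :
    K / 2 * (1 - γ) ^ 2 * Fintype.card V ≤ (∑ v ∈ L, #(L ∩ G.neighborFinset v) : ℕ) +
      (∑ v ∈ Lᶜ, #(Lᶜ ∩ G.neighborFinset v) : ℕ) :=
  calc K / 2 * (1 - γ) ^ 2 * Fintype.card V ≤ K / 2 * (x ⬝ᵥ x) := by
        rw [mul_assoc]
        gcongr
        exact le_dotProduct_self_of_le (sub_nonneg.2 hγ) hxγ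
    _ ≤ _ := hx.mul_dotProduct_le_sum_card_inter (by linarith) L

lemma card_mul_le_of_mul_dotProduct_self_le {V : Type*} [Fintype V] [Nonempty V] {x : V → ℝ} {γ : ℝ}
    (hγ : 0 ≤ γ) (hγ3 : γ ≤ 1 / 3) (hxγ : ∀ v, 1 - γ ≤ x v) {a b : ℝ} (hab : a * (x ⬝ᵥ x) ≤ b)
    (hb : 0 ≤ b) : Fintype.card V * a ≤ b * (1 + 6 * γ) := by
  have hγ1 : 0 < (1 - γ) ^ 2 := pow_pos (by linarith) 2
  have hW := le_dotProduct_self_of_le (by linarith) hxγ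
  have hW0 : 0 < x ⬝ᵥ x := lt_of_lt_of_le (by positivity) hW
  have hγ6 : 1 ≤ (1 + 6 * γ) * (1 - γ) ^ 2 := by
    have : 0 ≤ γ * (1 - 3 * γ) := mul_nonneg hγ (by linarith)
    have : 0 ≤ γ ^ 3 := by positivity
    linarith
  have hcard : Fintype.card V ≤ (1 + 6 * γ) * (x ⬝ᵥ x) :=
    calc (Fintype.card V : ℝ) ≤ (1 + 6 * γ) * (1 - γ) ^ 2 * Fintype.card V :=
          le_mul_of_one_le_left (Nat.cast_nonneg _) hγ6
      _ = (1 + 6 * γ) * ((1 - γ) ^ 2 * Fintype.card V) := mul_assoc ..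
      _ ≤ (1 + 6 * γ) * (x ⬝ᵥ x) := by gcongr
  calc Fintype.card V * a ≤ Fintype.card V * (b / (x ⬝ᵥ x)) := by
        gcongr; rwa [le_div_iff₀ hW0]
    _ ≤ (1 + 6 * γ) * (x ⬝ᵥ x) * (b / (x ⬝ᵥ x)) := by gcongr
    _ = b * (1 + 6 * γ) := by field_simp

lemma IsAlmostBiclique.exists_sum_card_inter_compl_le_two_of_isPerronVector {n k : ℕ} (hk : 6 ≤ k)
    (hke : Even k) {G : SimpleGraph (Fin n)} [DecidableRel G.Adj] (hG : WheelFree (2 * k + 1) G)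
    {γ μ : ℝ} (hγ : 0 ≤ γ) (hkγ : 200 * k ^ 4 * γ ≤ 1) (hkn : 400 * (k : ℝ) ^ 4 ≤ n)
    {x : Fin n → ℝ} (hx : IsPerronVector G μ x) (hμ : (n + (k - 1)) / 2 ≤ μ)
    (hxγ : ∀ v, 1 - γ ≤ x v) {L : Finset (Fin n)} (hL : IsAlmostBiclique G L Lᶜ ⌊γ * n⌋₊)
    (hLn : (1 / 2 - γ) * n ≤ #L) (hLcn : (1 / 2 - γ) * n ≤ #Lᶜ) :
    ∃ B : Finset (Fin n), (∀ v ∈ B, #(B ∩ G.neighborFinset v) ≤ k - 1) ∧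
      ∑ v ∈ Bᶜ, #(Bᶜ ∩ G.neighborFinset v) ≤ 2 := by
  have hk6 : (6 : ℝ) ≤ k := by exact_mod_cast hk
  have hkk : (k : ℝ) * 216 ≤ k ^ 4 := by nlinarith [pow_le_pow_left₀ (by norm_num) hk6 3]
  have hn : (0 : ℝ) < n := by linarith
  set m := ⌊γ * n⌋₊
  have hm : m ≤ γ * n := Nat.floor_le (by positivity)
  have hkm : 200 * (k ^ 4 * m) ≤ (n : ℝ) := by
    calc 200 * (k ^ 4 * m) ≤ 200 * (k ^ 4 * (γ * n)) := by gcongr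
      _ = 200 * k ^ 4 * γ * n := by ring
      _ ≤ n := mul_le_of_le_one_left hn.le hkγ
  set δ : ℝ := 1 / (100 * k)
  have hkδ : k * δ = 1 / 100 := by simp only [δ]; field_simp
  have hγδ : k * γ ≤ δ := by
    refine (le_div_iff₀ (by positivity)).2 (le_trans ?_ hkγ)
    have : (k : ℝ) ^ 2 ≤ k ^ 4 := pow_le_pow_right₀ (by linarith) (by norm_num)
    nlinarith
  have hmδ : k ^ 3 * (m + 2) ≤ δ * n := by
    have : δ * n = n / (100 * k) := one_div_mul_eq_div _ _
    rw [this, le_div_iff₀ (by positivity)]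
    linarith
  have hsize {B : Finset (Fin n)} (hB : (1 / 2 - γ) * n ≤ #B) : 2 * k + (k + 1) * m ≤ #B := by
    have hkm' : (k + 1) * (m : ℝ) ≤ k ^ 4 * m := by gcongr; linarith
    have hγn : γ * n ≤ n / 200 := by nlinarith
    rify
    linarith
  have hsize' {B : Finset (Fin n)} (hB : (1 / 2 - γ) * n ≤ #Bᶜ) : #B ≤ (1 / 2 + δ) * n := by
    have hcard : (#B + #Bᶜ : ℝ) = n := by exact_mod_cast (card_add_card_compl B).trans (by simp)
    have : γ * n ≤ δ * n := by gcongr; nlinarith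
    linarith
  have hsum : ((k - 1) / 2 - δ) * n ≤ (∑ v ∈ L, #(L ∩ G.neighborFinset v) : ℕ) +
      (∑ v ∈ Lᶜ, #(Lᶜ ∩ G.neighborFinset v) : ℕ) := by
    have hdeg := hx.mul_card_le_sum_card_inter_add (K := k - 1) (by linarith) (by nlinarith) hxγ
      (by rwa [Fintype.card_fin]) L
    rw [Fintype.card_fin] at hdeg
    refine le_trans ?_ hdeg
    gcongr
    nlinarith [sq_nonneg γ]
  exact hL.exists_sum_card_inter_compl_le_two hk hke hG (hsize hLn) (hsize hLcn)
    (by exact_mod_cast hn) (by positivity) hkδ.le (hsize' hLcn) (hsize' (by rwa [compl_compl]))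
    hmδ hsum

theorem eventually_exists_sum_card_inter_compl_le_two {k : ℕ} (hk : 6 ≤ k) (hke : Even k) {γ : ℝ}
    (hγ : 0 < γ) :
    ∀ᶠ n : ℕ in atTop, ∀ (G : SimpleGraph (Fin n)) [DecidableRel G.Adj],
      IsSpexWheel (2 * k + 1) G → (n + (k - 1)) / 2 ≤ lam1 G →
      ∃ (x : Fin n → ℝ) (A : Finset (Fin n)), IsPerronVector G (lam1 G) x ∧
        (∀ v, 1 - γ ≤ x v) ∧ (∀ v ∈ A, #(A ∩ G.neighborFinset v) ≤ k - 1) ∧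
        ∑ v ∈ Aᶜ, #(Aᶜ ∩ G.neighborFinset v) ≤ 2 := by
  have hk1 : (1 : ℝ) ≤ k := by rw [Nat.one_le_cast]; lia
  set γ' : ℝ := min γ (1 / (200 * k ^ 4))
  have hγ' : 0 < γ' := by positivity
  have hkγ : 200 * k ^ 4 * γ' ≤ 1 := by
    rw [mul_comm, ← le_div_iff₀ (by positivity)]
    exact min_le_right ..
  filter_upwards [eventually_exists_isAlmostBiclique_compl k hγ', eventually_ge_atTop (400 * k ^ 4)]
    with n hn hkn G _ hG hlam
  obtain ⟨x, L, hx, hxγ, hL, hLn, hLcn⟩ := hn G hG (by linarith)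
  obtain ⟨A, hA, hAc⟩ := hL.exists_sum_card_inter_compl_le_two_of_isPerronVector hk hke hG.1 hγ'.le
    hkγ (by exact_mod_cast hkn) hx hlam hxγ hLn hLcn
  exact ⟨x, A, hx, fun v ↦ (sub_le_sub_left (min_le_left ..) 1).trans (hxγ v), hA, hAc⟩

section UpperBound

variable {V : Type*} [Fintype V] [DecidableEq V] {G : SimpleGraph V} [DecidableRel G.Adj]
  {μ : ℝ} {x : V → ℝ} {A : Finset V} {K : ℕ}

lemma IsPerronVector.sub_joinRadius_mul_le_of_odd (hx : IsPerronVector G μ x)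
    (hA : ∀ v ∈ A, #(A ∩ G.neighborFinset v) ≤ K)
    (hAc : ∑ v ∈ Aᶜ, #(Aᶜ ∩ G.neighborFinset v) ≤ 2) (hodd : Odd #A) (hK : Odd K) {c : ℝ}
    (hc : 0 ≤ c) (hxc : ∀ v, c ≤ x v) :
    (μ - joinRadius K (#A * #Aᶜ)) * (x ⬝ᵥ x) ≤ 2 - c ^ 2 := by
  obtain ⟨u, hu, hdeg⟩ := exists_card_inter_neighborFinset_lt G hodd hK hA
  have hdeficit : c ^ 2 ≤ ∑ v ∈ A, (K - #(A ∩ G.neighborFinset v)) * x v ^ 2 := by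
    have hdeg' : (1 : ℝ) ≤ K - #(A ∩ G.neighborFinset u) := by
      rw [le_sub_iff_add_le']; exact_mod_cast hdeg
    calc c ^ 2 ≤ x u ^ 2 := by gcongr; exact hxc u
      _ ≤ (K - #(A ∩ G.neighborFinset u)) * x u ^ 2 := le_mul_of_one_le_left (sq_nonneg _) hdeg'
      _ ≤ ∑ v ∈ A, (K - #(A ∩ G.neighborFinset v)) * x v ^ 2 := by
        refine single_le_sum (f := fun v ↦ ((K : ℝ) - #(A ∩ G.neighborFinset v)) * x v ^ 2)
          (fun v hv ↦ mul_nonneg (sub_nonneg.2 ?_) (sq_nonneg _)) hu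
        exact_mod_cast hA v hv
  have hinner : ∑ v ∈ A, x v * ∑ w ∈ A ∩ G.neighborFinset v, x w ≤
      K * ∑ v ∈ A, x v ^ 2 + -c ^ 2 := by
    simp only [sub_mul, sum_sub_distrib, ← mul_sum] at hdeficit
    linarith [sum_mul_sum_inter_neighborFinset_le_sum_sq (G := G) x A]
  have hform := adjMatrix_form_le_of_inner_le hx.nonneg (Nat.cast_nonneg K) hinner
    ((hx.sum_mul_sum_inter_le Aᶜ).trans (Nat.cast_le.2 hAc))
  rw [hx.form_eq] at hform
  push_cast at hform
  linarith

lemma IsPerronVector.sub_joinRadius_mul_le_two (hx : IsPerronVector G μ x)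
    (hA : ∀ v ∈ A, #(A ∩ G.neighborFinset v) ≤ K)
    (hAc : ∑ v ∈ Aᶜ, #(Aᶜ ∩ G.neighborFinset v) ≤ 2) :
    (μ - joinRadius K (#A * #Aᶜ)) * (x ⬝ᵥ x) ≤ 2 := by
  have hinner : ∑ v ∈ A, x v * ∑ w ∈ A ∩ G.neighborFinset v, x w ≤
      K * ∑ v ∈ A, x v ^ 2 + 0 := by
    rw [add_zero, mul_sum]
    refine (sum_mul_sum_inter_neighborFinset_le_sum_sq x A).trans (sum_le_sum fun v hv ↦ ?_)
    gcongr
    exact hA v hv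
  have hform := adjMatrix_form_le_of_inner_le hx.nonneg (Nat.cast_nonneg K) hinner
    ((hx.sum_mul_sum_inter_le Aᶜ).trans (Nat.cast_le.2 hAc))
  rw [hx.form_eq] at hform
  push_cast at hform
  linarith

lemma card_mul_card_compl_le_sub_one (hV : Even (Fintype.card V)) (hcard : #A ≠ #Aᶜ) :
    (#A * #Aᶜ : ℝ) ≤ (Fintype.card V : ℝ) ^ 2 / 4 - 1 := by
  have hA := card_add_card_compl A
  have hdiff : 2 ≤ |(#A : ℤ) - #Aᶜ| := by
    obtain ⟨j, hj⟩ := hV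
    rw [le_abs]
    lia
  have hdiff' : (2 : ℝ) ^ 2 ≤ (#A - #Aᶜ : ℝ) ^ 2 := by
    rw [sq_le_sq, abs_two]; exact_mod_cast hdiff
  rw [← hA]
  push_cast
  linarith

/-- Since `|V| ≡ 2 (mod 4)`, the two sides are either unequal, which costs `1 / √(K² + |V|²)` in
the join radius, or both odd, which costs a vertex of degree less than `K` on the dense side. -/
lemma IsPerronVector.card_mul_sub_joinRadius_le (hx : IsPerronVector G μ x)
    (hV : Fintype.card V % 4 = 2) (hK : Odd K) (hA : ∀ v ∈ A, #(A ∩ G.neighborFinset v) ≤ K)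
    (hAc : ∑ v ∈ Aᶜ, #(Aᶜ ∩ G.neighborFinset v) ≤ 2) {γ : ℝ} (hγ : 0 ≤ γ) (hγ3 : γ ≤ 1 / 3)
    (hxγ : ∀ v, 1 - γ ≤ x v) (hKγ : K ≤ γ * Fintype.card V) :
    Fintype.card V * (μ - joinRadius K ((Fintype.card V : ℝ) ^ 2 / 4)) ≤ 1 + 13 * γ := by
  have hn0 : (0 : ℝ) < Fintype.card V := by rw [Nat.cast_pos]; lia
  have : Nonempty V := Fintype.card_pos_iff.1 (by lia)
  have hsum := card_add_card_compl A
  by_cases hcard : #A = #Aᶜ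
  · have hprod : (#A * #Aᶜ : ℝ) = (Fintype.card V : ℝ) ^ 2 / 4 := by
      rw [← hsum, ← hcard]; push_cast; ring
    have hodd : Odd #A := by rw [Nat.odd_iff]; lia
    have hγ2 : 0 ≤ γ * (1 - 3 * γ) := mul_nonneg hγ (by linarith)
    have hγ3 : 0 ≤ γ ^ 3 := by positivity
    have := card_mul_le_of_mul_dotProduct_self_le hγ (by linarith) hxγ
      (hx.sub_joinRadius_mul_le_of_odd hA hAc hodd hK (by linarith) hxγ) (by linarith)
    rw [hprod] at this
    linarith
  · have hmul := card_mul_le_of_mul_dotProduct_self_le hγ hγ3 hxγ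
      (hx.sub_joinRadius_mul_le_two hA hAc) zero_le_two
    have hprod := card_mul_card_compl_le_sub_one (by rw [Nat.even_iff]; lia) hcard
    have hdrop := (joinRadius_le_joinRadius (K := K) hprod).trans (joinRadius_sub_one_le (by
      have : (0 : ℝ) ≤ #A * #Aᶜ := by positivity
      linarith [sq_nonneg (K : ℝ)]))
    rw [mul_div_cancel₀ _ four_ne_zero] at hdrop
    have hdrop' := mul_le_mul_of_nonneg_left hdrop hn0.le
    rw [mul_sub, mul_one_div] at hdrop'
    linarith [one_sub_le_div_sqrt (Nat.cast_nonneg K) hn0 (by linarith) hKγ]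

end UpperBound

theorem eventually_natCast_mul_lam1_sub_joinRadius_le {k : ℕ} (hk : 6 ≤ k) (hke : Even k) {ε : ℝ}
    (hε : 0 < ε) :
    ∀ᶠ n : ℕ in atTop, n % 4 = 2 → ∀ G : SimpleGraph (Fin n), IsSpexWheel (2 * k + 1) G →
      joinRadius (k - 1) (n ^ 2 / 4) ≤ lam1 G →
      n * (lam1 G - joinRadius (k - 1) (n ^ 2 / 4)) ≤ 1 + ε := by
  classical
  set γ := min (ε / 13) (1 / 3)
  have hγ : 0 < γ := by positivity
  have hγε : 13 * γ ≤ ε := by linarith [min_le_left (ε / 13) (1 / 3)]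
  filter_upwards [eventually_exists_sum_card_inter_compl_le_two hk hke hγ,
    (tendsto_natCast_atTop_atTop.const_mul_atTop hγ).eventually_ge_atTop (k : ℝ)]
    with n hn hnk hn4 G hG hlam
  obtain ⟨x, A, hx, hxγ, hA, hAc⟩ := hn G hG (by linarith [add_div_two_le_joinRadius (k - 1) n])
  have hbound := hx.card_mul_sub_joinRadius_le (by rwa [Fintype.card_fin])
    (Nat.Even.sub_odd (by lia) hke odd_one) hA hAc hγ.le (min_le_right ..) hxγ (by
      rw [Fintype.card_fin]
      exact (Nat.cast_le.2 (Nat.sub_le k 1)).trans hnk)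
  rw [Fintype.card_fin, Nat.cast_pred (by lia)] at hbound
  linarith

lemma ContainsCopy.exists_zmod_cycle {V : Type*} {G : SimpleGraph V} {m : ℕ} (hm : 2 ≤ m)
    (h : ContainsCopy (wheelGraph (m + 1)) G) :
    ∃ (u : V) (c : ZMod m → V), c.Injective ∧ (∀ i, G.Adj u (c i)) ∧
      ∀ i, G.Adj (c i) (c (i + 1)) := by
  obtain ⟨f, hf⟩ := h
  have : NeZero m := ⟨by lia⟩
  have : Fact (1 < m) := ⟨by lia⟩
  refine ⟨f 0, fun i ↦ f ⟨i.val + 1, by simpa using i.val_lt⟩, fun i j hij ↦ ?_, fun i ↦ ?_,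
    fun i ↦ ?_⟩
  · simpa [Fin.ext_iff, (ZMod.val_injective m).eq_iff] using f.injective hij
  · exact hf _ _ ⟨by simp [Fin.ext_iff], Or.inl rfl⟩
  · apply hf
    by_cases hi : i.val + 1 < m
    · have hval : (i + 1).val = i.val + 1 := by
        rw [ZMod.val_add_of_lt (by rwa [ZMod.val_one]), ZMod.val_one]
      simp [wheelGraph, hval]
    · have hi' : i.val = m - 1 := by have := i.val_lt; lia
      have h0 : i + 1 = 0 := by
        rw [← ZMod.natCast_zmod_val i, hi', Nat.cast_pred (by lia)]
        simp
      simp only [wheelGraph, ne_eq, Fin.ext_iff, h0, hi', ZMod.val_zero]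
      lia

section CompleteJoin

variable {V W : Type*}

/-- The complete join of two graphs: their disjoint union together with all the edges between
them. -/
def completeJoin (H : SimpleGraph V) (F : SimpleGraph W) : SimpleGraph (V ⊕ W) :=
  (H ⊕g F) ⊔ completeBipartiteGraph V W

variable {H : SimpleGraph V} {F : SimpleGraph W} {v v' : V} {w w' : W}

@[simp]
lemma completeJoin_adj_inl_inl : (completeJoin H F).Adj (.inl v) (.inl v') ↔ H.Adj v v' := by
  simp [completeJoin]

@[simp]
lemma completeJoin_adj_inr_inr : (completeJoin H F).Adj (.inr w) (.inr w') ↔ F.Adj w w' := by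
  simp [completeJoin]

@[simp]
lemma completeJoin_adj_inl_inr : (completeJoin H F).Adj (.inl v) (.inr w) := by
  simp [completeJoin]

@[simp]
lemma completeJoin_adj_inr_inl : (completeJoin H F).Adj (.inr w) (.inl v) := by
  simp [completeJoin]

instance [DecidableRel H.Adj] [DecidableRel F.Adj] : DecidableRel (completeJoin H F).Adj
  | .inl _, .inl _ => decidable_of_iff' _ completeJoin_adj_inl_inl
  | .inl _, .inr _ => isTrue completeJoin_adj_inl_inr
  | .inr _, .inl _ => isTrue completeJoin_adj_inr_inl
  | .inr _, .inr _ => decidable_of_iff' _ completeJoin_adj_inr_inr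

variable {m : ℕ} {c : ZMod m → V ⊕ W}

lemma le_two_mul_card_filter_isLeft_add_one [NeZero m] (hm : 3 ≤ m) (hF : F.edgeSet.Subsingleton)
    (hc : c.Injective) (hcyc : ∀ i, (completeJoin H F).Adj (c i) (c (i + 1))) :
    m ≤ 2 * #{i | (c i).isLeft} + 1 := by
  have hone : #{i | (c i).isRight ∧ (c (i + 1)).isRight} ≤ 1 := by
    simp only [card_le_one, mem_filter_univ, Sum.isRight_iff]
    rintro i ⟨⟨p, hp⟩, q, hq⟩ j ⟨⟨p', hp'⟩, q', hq'⟩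
    have hpq : F.Adj p q := by simpa [hp, hq] using hcyc i
    have hpq' : F.Adj p' q' := by simpa [hp', hq'] using hcyc j
    obtain ⟨rfl, -⟩ | ⟨rfl, rfl⟩ := Sym2.eq_iff.1 (hF hpq hpq')
    · exact hc (hp.trans hp'.symm)
    · have hij : i = j + 1 := hc (hp.trans hq'.symm)
      have hji : i + 1 = j := hc (hq.trans hp'.symm)
      have h2 : ((2 : ℕ) : ZMod m) = 0 := by
        rw [hij, add_assoc, add_eq_left, one_add_one_eq_two] at hji
        exact_mod_cast hji
      exact absurd (Nat.le_of_dvd two_pos ((ZMod.natCast_eq_zero_iff 2 m).1 h2)) (by lia)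
  have hshift : #{i | (c (i + 1)).isLeft} = #{i | (c i).isLeft} :=
    card_equiv (Equiv.addRight 1) (by simp)
  calc m = #(univ : Finset (ZMod m)) := by rw [card_univ, ZMod.card]
    _ ≤ #(({i | (c i).isLeft} : Finset (ZMod m)) ∪ ({i | (c (i + 1)).isLeft} : Finset (ZMod m)) ∪
          ({i | (c i).isRight ∧ (c (i + 1)).isRight} : Finset (ZMod m))) := by
        refine card_le_card fun i _ ↦ ?_
        simp only [mem_union, mem_filter_univ]
        cases c i <;> cases c (i + 1) <;> simp
    _ ≤ #{i | (c i).isLeft} + #{i | (c (i + 1)).isLeft} + 1 := by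
        grw [card_union_le, card_union_le, hone]
    _ = 2 * #{i | (c i).isLeft} + 1 := by lia

lemma exists_forall_ne_isLeft [Nonempty (ZMod m)] (hF : F.edgeSet.Subsingleton)
    (hc : c.Injective) (hhub : ∀ i, (completeJoin H F).Adj (.inr w) (c i)) :
    ∃ s, ∀ i ≠ s, ∃ v, c i = .inl v := by
  by_cases hright : ∃ s p, c s = .inr p
  · obtain ⟨s, p, hs⟩ := hright
    refine ⟨s, fun i hi ↦ ?_⟩
    cases hci : c i with
    | inl v => exact ⟨v, rfl⟩
    | inr q =>
      have hp : F.Adj w p := by simpa [hs] using hhub s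
      have hq : F.Adj w q := by simpa [hci] using hhub i
      exact absurd (hc (by rw [hci, hs, Sym2.congr_right.1 (hF hq hp)])) hi
  · push Not at hright
    refine ⟨Classical.arbitrary _, fun i _ ↦ ?_⟩
    cases hci : c i with
    | inl v => exact ⟨v, rfl⟩
    | inr q => exact absurd hci (hright i q)

lemma le_card_of_forall_ne_isLeft [NeZero m]
    (hc : c.Injective) (hcyc : ∀ i, (completeJoin H F).Adj (c i) (c (i + 1))) {s : ZMod m}
    (hs : ∀ i ≠ s, ∃ v, c i = .inl v) {S : Finset V} (hS : ∀ x ∈ S, ∀ y, H.Adj x y → y ∈ S)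
    (hv : v ∈ S) (hsv : c (s + 1) = .inl v) : m - 1 ≤ #S := by
  have hmem (t : ℕ) (ht : t < m - 1) : c (s + 1 + t) ∈ S.map .inl := by
    induction t with
    | zero => simpa [hsv] using hv
    | succ t ih =>
      obtain ⟨x, hx, hxt⟩ := Finset.mem_map.1 (ih (by lia))
      have hne : s + 1 + (t + 1 : ℕ) ≠ s := by
        rw [add_assoc, Ne, add_eq_left, ← Nat.cast_one, ← Nat.cast_add, ZMod.natCast_eq_zero_iff]
        exact fun hdvd ↦ absurd (Nat.le_of_dvd (by lia) hdvd) (by lia)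
      obtain ⟨y, hy⟩ := hs _ hne
      have hadj := hcyc (s + 1 + t)
      rw [add_assoc (s + 1), ← Nat.cast_succ, hy, ← hxt] at hadj
      rw [hy]
      exact mem_map_of_mem _ (hS x hx y (completeJoin_adj_inl_inl.1 hadj))
  rw [← card_range (m - 1), ← card_map (Function.Embedding.inl (β := W)) (s := S)]
  refine card_le_card_of_injOn (fun t ↦ c (s + 1 + t)) (fun t ht ↦ hmem t (mem_range.1 ht))
    fun t ht t' ht' htt ↦ ?_
  have hmod := (ZMod.natCast_eq_natCast_iff _ _ _).1 (add_left_cancel (hc htt))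
  rw [coe_range, Set.mem_Iio] at ht ht'
  exact hmod.eq_of_lt_of_lt (by lia) (by lia)

lemma not_containsCopy_wheelGraph_completeJoin [Fintype V] [DecidableRel H.Adj] {d : ℕ}
    (hm : 3 ≤ m) (hd : 2 * d + 2 ≤ m) (hH : ∀ v, H.degree v ≤ d)
    (hS : ∀ v, ∃ S : Finset V, v ∈ S ∧ #S + 1 < m ∧ ∀ x ∈ S, ∀ y, H.Adj x y → y ∈ S)
    (hF : F.edgeSet.Subsingleton) :
    ¬ ContainsCopy (wheelGraph (m + 1)) (completeJoin H F) := by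
  intro hcopy
  obtain ⟨u | w, c, hc, hhub, hcyc⟩ := hcopy.exists_zmod_cycle (by lia)
  all_goals have : NeZero m := ⟨by lia⟩
  · have hleft : #{i | (c i).isLeft} ≤ #(H.neighborFinset u) := by
      rw [← card_map (Function.Embedding.inl (β := W)) (s := H.neighborFinset u)]
      refine card_le_card_of_injOn c (fun i hi ↦ ?_) hc.injOn
      obtain ⟨v, hv⟩ := Sum.isLeft_iff.1 (by simpa using hi)
      have hadj := hhub i
      rw [hv] at hadj ⊢
      exact mem_map_of_mem _ (by simpa using hadj)
    have := le_two_mul_card_filter_isLeft_add_one hm hF hc hcyc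
    rw [SimpleGraph.card_neighborFinset_eq_degree] at hleft
    have := hH u
    lia
  · obtain ⟨s, hs⟩ := exists_forall_ne_isLeft hF hc hhub
    have : Fact (1 < m) := ⟨by lia⟩
    obtain ⟨v, hv⟩ := hs (s + 1) (by simp)
    obtain ⟨S, hvS, hcard, hclosed⟩ := hS v
    have := le_card_of_forall_ne_isLeft hc hcyc hs hclosed hvS hv
    lia

end CompleteJoin

section RegularGraphs

lemma isRegularOfDegree_circulantGraph {Γ : Type*} [AddGroup Γ] [Fintype Γ] [DecidableEq Γ]
    {s : Finset Γ} (h0 : 0 ∉ s) (hneg : ∀ x ∈ s, -x ∈ s) :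
    (SimpleGraph.circulantGraph (s : Set Γ)).IsRegularOfDegree #s := by
  intro v
  refine card_equiv (Equiv.subRight v) fun u ↦ ?_
  have hsymm : v - u ∈ s ↔ u - v ∈ s :=
    ⟨fun h ↦ by simpa using hneg _ h, fun h ↦ by simpa using hneg _ h⟩
  simp only [SimpleGraph.mem_neighborFinset, SimpleGraph.circulantGraph_adj, mem_coe, hsymm,
    or_self, Equiv.subRight_apply, and_iff_right_iff_imp]
  rintro h rfl
  exact h0 (by simpa using h)

lemma exists_isRegularOfDegree_zmod {a d : ℕ} [NeZero a] (had : Odd (a + d)) (hd : d < a) :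
    ∃ (H : SimpleGraph (ZMod a)) (_ : DecidableRel H.Adj), H.IsRegularOfDegree d := by
  obtain ⟨h, hh⟩ : ∃ h, a = d + (2 * h + 1) := by
    obtain ⟨t, ht⟩ := had
    exact ⟨t - d, by lia⟩
  set s : Finset (ZMod a) := {x | h < x.val ∧ x.val < a - h}
  have hs : #s = d := by
    rw [← card_image_of_injective s (ZMod.val_injective a)]
    have himage : s.image ZMod.val = Ioo h (a - h) := by
      ext t
      simp only [s, mem_image, mem_filter_univ, mem_Ioo]
      refine ⟨?_, fun ht ↦ ⟨t, ?_⟩⟩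
      · rintro ⟨x, hx, rfl⟩
        exact hx
      · rw [ZMod.val_natCast_of_lt (by lia)]
        exact ⟨ht, rfl⟩
    rw [himage, Nat.card_Ioo]
    lia
  refine ⟨SimpleGraph.circulantGraph (s : Set (ZMod a)), inferInstance, hs ▸
    isRegularOfDegree_circulantGraph (by simp [s]) fun x hx ↦ ?_⟩
  have := x.val_lt
  simp only [s, mem_filter_univ, ZMod.neg_val] at hx ⊢
  split_ifs with h0
  · simp [h0] at hx
  · lia

lemma isRegularOfDegree_sum {V W : Type*} [Fintype V] [Fintype W] {H : SimpleGraph V}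
    {F : SimpleGraph W} [DecidableRel H.Adj] [DecidableRel F.Adj] [DecidableRel (H ⊕g F).Adj]
    {d : ℕ} (hH : H.IsRegularOfDegree d) (hF : F.IsRegularOfDegree d) :
    (H ⊕g F).IsRegularOfDegree d := by
  rintro (v | w)
  · rw [← hH v, ← SimpleGraph.card_neighborFinset_eq_degree,
      ← SimpleGraph.card_neighborFinset_eq_degree, ← card_map (.inl : V ↪ V ⊕ W)]
    congr 1
    ext (u | u) <;> simp
  · rw [← hF w, ← SimpleGraph.card_neighborFinset_eq_degree,
      ← SimpleGraph.card_neighborFinset_eq_degree, ← card_map (.inr : W ↪ V ⊕ W)]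
    congr 1
    ext (u | u) <;> simp

lemma exists_isRegularOfDegree_closed_le {d : ℕ} (hd : Odd d) {a : ℕ} (ha : Even a)
    (hda : d < a) :
    ∃ (V : Type) (_ : Fintype V) (H : SimpleGraph V) (_ : DecidableRel H.Adj),
      Fintype.card V = a ∧ H.IsRegularOfDegree d ∧
      ∀ v, ∃ S : Finset V, v ∈ S ∧ #S ≤ 2 * d ∧ ∀ x ∈ S, ∀ y, H.Adj x y → y ∈ S := by
  induction a using Nat.strong_induction_on with
  | _ a ih =>
    by_cases hsmall : a ≤ 2 * d
    · have : NeZero a := ⟨by lia⟩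
      obtain ⟨H, hdec, hH⟩ := exists_isRegularOfDegree_zmod (a := a) (ha.add_odd hd) hda
      exact ⟨ZMod a, inferInstance, H, hdec, ZMod.card a, hH,
        fun v ↦ ⟨univ, mem_univ v, by simpa, by simp⟩⟩
    · have hpar := hd
      rw [Nat.even_iff] at ha
      rw [Nat.odd_iff] at hpar
      obtain ⟨V, _, H, _, hcard, hH, hclosed⟩ :=
        ih (a - (d + 1)) (by lia) (by rw [Nat.even_iff]; lia) (by lia)
      have htop : (⊤ : SimpleGraph (Fin (d + 1))).IsRegularOfDegree d := by
        simpa using SimpleGraph.IsRegularOfDegree.top (V := Fin (d + 1))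
      classical
      refine ⟨V ⊕ Fin (d + 1), inferInstance, H ⊕g ⊤, Classical.decRel _, ?_,
        isRegularOfDegree_sum hH htop, ?_⟩
      · rw [Fintype.card_sum, hcard, Fintype.card_fin]
        lia
      · rintro (v | i)
        · obtain ⟨S, hvS, hS, hSclosed⟩ := hclosed v
          refine ⟨S.map .inl, mem_map_of_mem _ hvS, by rwa [card_map], ?_⟩
          simpa using hSclosed
        · have := hd.pos
          refine ⟨univ.map .inr, mem_map_of_mem _ (mem_univ i), by simp; lia, by simp⟩

end RegularGraphs

section LowerBound

lemma adjMatrix_form_le_lam1_comap_mul {V : Type*} [Fintype V] (G : SimpleGraph V)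
    [DecidableRel G.Adj] {n : ℕ} (e : Fin n ≃ V) (x : V → ℝ) :
    x ⬝ᵥ G.adjMatrix ℝ *ᵥ x ≤ lam1 (G.comap e) * (x ⬝ᵥ x) := by
  have hform : (x ∘ e) ⬝ᵥ (G.comap e).adjMatrix ℝ *ᵥ (x ∘ e) = x ⬝ᵥ G.adjMatrix ℝ *ᵥ x := by
    have hsub : (G.comap e).adjMatrix ℝ = (G.adjMatrix ℝ).submatrix e e := by
      ext i j
      simp [SimpleGraph.adjMatrix_apply]
    rw [hsub, submatrix_mulVec_equiv, comp_equiv_dotProduct_comp_equiv, Function.comp_assoc,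
      e.self_comp_symm, Function.comp_id]
  rw [← hform, ← comp_equiv_dotProduct_comp_equiv x x e]
  exact adjMatrix_form_le_lam1_mul _ _

section CompleteJoin

variable {V W : Type*} [Fintype V] [Fintype W] (H : SimpleGraph V) [DecidableRel H.Adj]
  (F : SimpleGraph W) [DecidableRel F.Adj]

lemma sum_neighborFinset_completeJoin_inl (x : V ⊕ W → ℝ) (v : V) :
    ∑ u ∈ (completeJoin H F).neighborFinset (.inl v), x u =
      ∑ u ∈ H.neighborFinset v, x (.inl u) + ∑ w, x (.inr w) := by
  simp [SimpleGraph.neighborFinset_eq_filter, sum_filter]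

lemma sum_neighborFinset_completeJoin_inr (x : V ⊕ W → ℝ) (w : W) :
    ∑ u ∈ (completeJoin H F).neighborFinset (.inr w), x u =
      ∑ v, x (.inl v) + ∑ u ∈ F.neighborFinset w, x (.inr u) := by
  simp [SimpleGraph.neighborFinset_eq_filter, sum_filter]

variable {H} {d : ℕ}

lemma completeJoin_form_elim_const (hH : H.IsRegularOfDegree d) (α β : ℝ) :
    Sum.elim (fun _ ↦ α) (fun _ ↦ β) ⬝ᵥ
        (completeJoin H F).adjMatrix ℝ *ᵥ Sum.elim (fun _ ↦ α) (fun _ ↦ β) =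
      Fintype.card V * (α * (d * α + Fintype.card W * β)) +
        Fintype.card W * (β * (Fintype.card V * α)) + 2 * #F.edgeFinset * β ^ 2 := by
  have hdeg : (∑ w, F.degree w : ℝ) = 2 * #F.edgeFinset := by
    exact_mod_cast F.sum_degrees_eq_twice_card_edges
  simp only [adjMatrix_form_eq_sum, Fintype.sum_sum_type, sum_neighborFinset_completeJoin_inl,
    sum_neighborFinset_completeJoin_inr, Sum.elim_inl, Sum.elim_inr, sum_const, card_univ,
    SimpleGraph.card_neighborFinset_eq_degree, hH.degree_eq, nsmul_eq_mul, mul_add,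
    sum_add_distrib, ← mul_sum, ← sum_mul, hdeg]
  ring

lemma le_lam1_comap_completeJoin_sub_joinRadius_mul [Nonempty V] (hH : H.IsRegularOfDegree d)
    {n : ℕ} (e : Fin n ≃ V ⊕ W) :
    2 * #F.edgeFinset * Fintype.card V ≤
      (lam1 ((completeJoin H F).comap e) - joinRadius d (Fintype.card V * Fintype.card W)) *
        (joinRadius d (Fintype.card V * Fintype.card W) ^ 2 +
          Fintype.card V * Fintype.card W) := by
  set a := (Fintype.card V : ℝ)
  set b := (Fintype.card W : ℝ)
  have ha : 0 < a := Nat.cast_pos.2 Fintype.card_pos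
  set θ := joinRadius d (a * b)
  have hθ : θ ^ 2 = d * θ + a * b := joinRadius_sq d (by positivity)
  have hform := adjMatrix_form_le_lam1_comap_mul (completeJoin H F) e
    (Sum.elim (fun _ ↦ θ) (fun _ ↦ a))
  rw [completeJoin_form_elim_const F hH] at hform
  have hself : (Sum.elim (fun _ ↦ θ) (fun _ ↦ a) : V ⊕ W → ℝ) ⬝ᵥ
      Sum.elim (fun _ ↦ θ) (fun _ ↦ a) = a * (θ ^ 2 + a * b) := by
    simp only [dotProduct, Fintype.sum_sum_type, Sum.elim_inl, Sum.elim_inr, sum_const, card_univ,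
      nsmul_eq_mul]
    ring
  rw [hself] at hform
  refine le_of_mul_le_mul_left ?_ ha
  linear_combination hform + a * θ * hθ

end CompleteJoin

lemma one_sub_le_mul_sub_joinRadius {K N δ μ : ℝ} (hK : 2 ≤ K) (hN : 2 ≤ N) (hδ : δ ≤ 1)
    (hKN : K ≤ δ * N)
    (hμ : N ≤ (μ - joinRadius K (N ^ 2 / 4 - 1)) *
      (joinRadius K (N ^ 2 / 4 - 1) ^ 2 + (N ^ 2 / 4 - 1))) :
    1 - 6 * δ ≤ N * (μ - joinRadius K (N ^ 2 / 4)) := by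
  have hp : 0 ≤ N ^ 2 / 4 - 1 := by nlinarith
  set θ := joinRadius K (N ^ 2 / 4 - 1)
  have hδ0 : 0 < δ := by nlinarith
  have hθ : θ ≤ K + N / 2 := (joinRadius_le_joinRadius (by linarith)).trans
    (joinRadius_sq_div_four_le (by linarith) (by linarith))
  have hden : θ ^ 2 + (N ^ 2 / 4 - 1) ≤ N ^ 2 * (1 + 3 * δ) / 2 :=
    calc θ ^ 2 + (N ^ 2 / 4 - 1) ≤ K * (K + N / 2) + N ^ 2 / 2 := by
          rw [joinRadius_sq K hp]; nlinarith
      _ ≤ δ * N * (N + N / 2) + N ^ 2 / 2 := by gcongr; nlinarith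
      _ = N ^ 2 * (1 + 3 * δ) / 2 := by ring
  have hμθ : 0 < μ - θ := pos_of_mul_pos_left (lt_of_lt_of_le (by linarith) hμ) (by positivity)
  have hgain : 2 ≤ N * (μ - θ) * (1 + 3 * δ) := by
    refine le_of_mul_le_mul_left (a := N) ?_ (by linarith)
    linarith [hμ.trans (mul_le_mul_of_nonneg_left hden hμθ.le)]
  have hdrop := joinRadius_le_joinRadius_sub_one_add (K := K) (p := N ^ 2 / 4) (N := N)
    (by linarith) (by nlinarith)
  have hdrop' : N * joinRadius K (N ^ 2 / 4) ≤ N * θ + 1 := by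
    calc N * joinRadius K (N ^ 2 / 4) ≤ N * (θ + 1 / N) := by gcongr
      _ = N * θ + 1 := by field_simp
  have hgain' : 2 - 6 * δ ≤ N * (μ - θ) := by nlinarith
  linarith

end LowerBound

section Existence

lemma WheelFree.exists_isSpexWheel {t n : ℕ} {G₀ : SimpleGraph (Fin n)} (h : WheelFree t G₀) :
    ∃ G : SimpleGraph (Fin n), IsSpexWheel t G :=
  Set.exists_max_image {G : SimpleGraph (Fin n) | WheelFree t G} lam1 (Set.toFinite _) ⟨G₀, h⟩

lemma IsSpexWheel.spexWheel_eq {k n : ℕ} {G : SimpleGraph (Fin n)}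
    (hG : IsSpexWheel (2 * k + 1) G) : spexWheel k n = lam1 G := by
  refine IsGreatest.csSup_eq ⟨⟨G, hG.1, rfl⟩, ?_⟩
  rintro _ ⟨H, hH, rfl⟩
  exact hG.2 H hH

lemma wheelFree_comap_completeJoin {V W : Type*} [Fintype V] {H : SimpleGraph V}
    [DecidableRel H.Adj] {F : SimpleGraph W} {k n : ℕ} (hk : 2 ≤ k)
    (hH : H.IsRegularOfDegree (k - 1))
    (hS : ∀ v, ∃ S : Finset V, v ∈ S ∧ #S ≤ 2 * (k - 1) ∧ ∀ x ∈ S, ∀ y, H.Adj x y → y ∈ S)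
    (hF : F.edgeSet.Subsingleton) (e : Fin n ≃ V ⊕ W) :
    WheelFree (2 * k + 1) ((completeJoin H F).comap e) := by
  rintro ⟨f, hf⟩
  refine not_containsCopy_wheelGraph_completeJoin (m := 2 * k) (d := k - 1) (by lia) (by lia)
    (fun v ↦ (hH v).le) (fun v ↦ ?_) hF ⟨f.trans e.toEmbedding, hf⟩
  obtain ⟨S, hvS, hcard, hclosed⟩ := hS v
  exact ⟨S, hvS, by lia, hclosed⟩

lemma exists_wheelFree_le_lam1_sub_joinRadius_mul {k n : ℕ} (hk : 2 ≤ k) (hke : Even k)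
    (hn4 : n % 4 = 2) (hkn : 2 * k ≤ n) :
    ∃ G : SimpleGraph (Fin n), WheelFree (2 * k + 1) G ∧
      (n : ℝ) ≤ (lam1 G - joinRadius (k - 1) ((n : ℝ) ^ 2 / 4 - 1)) *
        (joinRadius (k - 1) ((n : ℝ) ^ 2 / 4 - 1) ^ 2 + ((n : ℝ) ^ 2 / 4 - 1)) := by
  classical
  obtain ⟨j, rfl⟩ : ∃ j, n = 2 * (j + 3) := ⟨n / 2 - 3, by lia⟩
  obtain ⟨V, _, H, _, hcard, hH, hS⟩ := exists_isRegularOfDegree_closed_le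
    (Nat.Even.sub_odd (by lia) hke odd_one) (a := j + 4) (by rw [Nat.even_iff]; lia) (by lia)
  have : Nonempty V := Fintype.card_pos_iff.1 (by lia)
  obtain ⟨F, hF⟩ : ∃ F : SimpleGraph (Fin (j + 2)), F.edgeSet = {s(0, 1)} :=
    ⟨.edge 0 1, SimpleGraph.edgeSet_edge_of_ne zero_ne_one⟩
  have e : Fin (2 * (j + 3)) ≃ V ⊕ Fin (j + 2) := Fintype.equivOfCardEq (by
    rw [Fintype.card_sum, hcard, Fintype.card_fin, Fintype.card_fin]; lia)
  have hcardF : #F.edgeFinset = 1 :=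
    card_eq_one.2 ⟨s(0, 1), coe_injective (by simp [hF])⟩
  refine ⟨_, wheelFree_comap_completeJoin hk hH hS (hF ▸ Set.subsingleton_singleton) e, ?_⟩
  have hbound := le_lam1_comap_completeJoin_sub_joinRadius_mul F hH e
  have hprod : (Fintype.card V : ℝ) * Fintype.card (Fin (j + 2)) =
      ((2 * (j + 3) : ℕ) : ℝ) ^ 2 / 4 - 1 := by
    rw [hcard, Fintype.card_fin]; push_cast; ring
  rw [hprod, Nat.cast_pred (by lia)] at hbound
  refine le_trans ?_ hbound
  rw [hcardF, hcard]
  push_cast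
  linarith

end Existence

theorem eventually_exists_wheelFree_one_sub_le {k : ℕ} (hk : 3 ≤ k) (hke : Even k) {ε : ℝ}
    (hε : 0 < ε) :
    ∀ᶠ n : ℕ in atTop, n % 4 = 2 → ∃ G : SimpleGraph (Fin n), WheelFree (2 * k + 1) G ∧
      1 - ε ≤ n * (lam1 G - joinRadius (k - 1) (n ^ 2 / 4)) := by
  have hδ : 0 < min (ε / 6) 1 := by positivity
  filter_upwards [eventually_ge_atTop (2 * k),
    (tendsto_natCast_atTop_atTop.const_mul_atTop hδ).eventually_ge_atTop (k : ℝ)]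
    with n hkn hnk hn4
  obtain ⟨G, hG, hlam⟩ :=
    exists_wheelFree_le_lam1_sub_joinRadius_mul (by lia) hke hn4 hkn
  have hk3 : (3 : ℝ) ≤ k := by exact_mod_cast hk
  have hn2 : (2 : ℝ) ≤ n := by exact_mod_cast (by lia : 2 ≤ n)
  refine ⟨G, hG, le_trans ?_ (one_sub_le_mul_sub_joinRadius (by linarith) hn2
    (min_le_right (ε / 6) 1) (by linarith) hlam)⟩
  linarith [min_le_left (ε / 6) 1]

end

/-- For even `k ≥ 6`, as `n → ∞` along `n ≡ 2 (mod 4)`,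
`n·(spex(n, W_{2k+1}) - (k - 1 + √((k-1)² + n²))/2) → 1`. -/
theorem spex_asymptotics_mod_four (k : ℕ) (hk : 6 ≤ k) (hke : Even k) :
    Filter.Tendsto
      (fun n : ℕ => (n : ℝ) *
        (spexWheel k n -
          ((k : ℝ) - 1 + Real.sqrt (((k : ℝ) - 1) ^ 2 + (n : ℝ) ^ 2)) / 2))
      (Filter.atTop ⊓ Filter.principal {n : ℕ | n % 4 = 2}) (nhds 1) := by
  simp only [← joinRadius_sq_div_four]
  refine Metric.tendsto_nhds.2 fun ε hε ↦ Filter.eventually_inf_principal.2 ?_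
  have hδ : 0 < min (ε / 2) (1 / 2) := by positivity
  filter_upwards [eventually_exists_wheelFree_one_sub_le (by lia) hke hδ,
    eventually_natCast_mul_lam1_sub_joinRadius_le hk hke hδ] with n hlower hupper hn4
  obtain ⟨G₀, hG₀, hlower⟩ := hlower hn4
  obtain ⟨G, hG⟩ := hG₀.exists_isSpexWheel
  have hle := mul_le_mul_of_nonneg_left (hG.2 G₀ hG₀) (Nat.cast_nonneg (α := ℝ) n)
  have hpos : 0 < n * (lam1 G - joinRadius (k - 1) (n ^ 2 / 4)) := by
    linarith [min_le_right (ε / 2) (1 / 2)]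
  have hupper := hupper hn4 G hG (sub_nonneg.1 (pos_of_mul_pos_right hpos n.cast_nonneg).le)
  rw [hG.spexWheel_eq, Real.dist_eq, abs_sub_lt_iff]
  constructor <;> linarith [min_le_left (ε / 2) (1 / 2)]
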